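/- arXiv:1409.3473 — 3 statements merged into one kernel-verified Lean document; each statement's English description precedes it below -/
import Mathlib

section
/- Let (R, 𝔪) be a Noetherian local ring of Krull dimension d containing a field of characteristic p > 0. Then the following conditions are equivalent: (1) R is a regular local ring; (2) the Frobenius homomorphism F : R → R, x ↦ x^p, is flat; (3) ℓ_R(R/𝔪^{[p]}) = p^d; (4) for every power q = p^e of p, ℓ_R(R/𝔪^{[q]}) = q^d. -/
open IsLocalRing Filter Topology
open scoped TensorProduct

/-- The Frobenius bracket power `I^{[q]}`: the ideal generated by `q`-th powers of elements of `I`. -/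
def Ideal.bracketPow {R : Type*} [CommRing R] (I : Ideal R) (q : ℕ) : Ideal R :=
  Ideal.span ((fun a => a ^ q) '' (I : Set R))

/-- `R°`: the set of elements of `R` not contained in any minimal prime ideal. -/
def ringCirc (R : Type*) [CommRing R] : Set R :=
  {c | ∀ P ∈ minimalPrimes R, c ∉ P}

/-- The tight closure of an ideal `I` in a ring of characteristic `p`:
`x ∈ I^*` iff there is `c ∈ R°` with `c * x ^ (p ^ e) ∈ I^{[p^e]}` for all sufficiently
large `e`. -/
def tightClosure {R : Type*} [CommRing R] (p : ℕ) (I : Ideal R) : Set R :=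
  {x | ∃ c ∈ ringCirc R, ∃ N : ℕ, ∀ e : ℕ, N ≤ e → c * x ^ p ^ e ∈ I.bracketPow (p ^ e)}

/-- `x` is integral over the ideal `J`: there are `n ≥ 1` and `aᵢ ∈ Jⁱ` with
`x ^ n + a₁ x ^ (n-1) + ⋯ + aₙ = 0`. -/
def IsIntegralOverIdeal {R : Type*} [CommRing R] (J : Ideal R) (x : R) : Prop :=
  ∃ n : ℕ, 0 < n ∧ ∃ a : ℕ → R, (∀ i ∈ Finset.Icc 1 n, a i ∈ J ^ i) ∧
    x ^ n + ∑ i ∈ Finset.Icc 1 n, a i * x ^ (n - i) = 0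

/-- `R` is F-finite: `F_*R` is a finitely generated `R`-module, i.e. there is a finite set
of generators `s` such that every element of `R` is an `R`-linear combination of elements of
`s` with respect to the Frobenius-twisted action `r • b = r ^ p * b`. -/
def FFinite (R : Type*) [CommRing R] (p : ℕ) : Prop :=
  ∃ s : Finset R, ∀ x : R, ∃ a : R → R, x = ∑ b ∈ s, a b ^ p * b

/-- The map `cF^e : R → F^e_* R`, `x ↦ c * x ^ (p ^ e)`, splits as an `R`-module
homomorphism: there is an additive `φ : R → R` with `φ (r ^ (p ^ e) * x) = r * φ x`
for all `r, x` and `φ c = 1`. -/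
def FrobSplitsWith {R : Type*} [CommRing R] (p : ℕ) (c : R) (e : ℕ) : Prop :=
  ∃ φ : R →+ R, (∀ r x : R, φ (r ^ p ^ e * x) = r * φ x) ∧ φ c = 1

/-- `R` is strongly F-regular: F-finite, reduced, and for every `c ∈ R°` some `cF^e` splits. -/
def StronglyFRegular (R : Type*) [CommRing R] (p : ℕ) : Prop :=
  FFinite R p ∧ IsReduced R ∧ ∀ c ∈ ringCirc R, ∃ e : ℕ, FrobSplitsWith p c e

/-- `R` is F-pure: the Frobenius map `R → F_* R` splits as an `R`-module homomorphism. -/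
def FPure (R : Type*) [CommRing R] (p : ℕ) : Prop :=
  ∃ φ : R →+ R, (∀ r x : R, φ (r ^ p * x) = r * φ x) ∧ φ 1 = 1

/-- A regular local ring: a Noetherian local ring whose maximal ideal can be generated by
`dim R` elements. -/
def IsRegularLocal (R : Type*) [CommRing R] [IsLocalRing R] : Prop :=
  IsNoetherianRing R ∧ ∃ (d : ℕ) (x : Fin d → R),
    ringKrullDim R = d ∧ IsLocalRing.maximalIdeal R = Ideal.span (Set.range x)

/-- The height of an ideal: the infimum of the heights of the primes containing it. -/
noncomputable def idealHeight {R : Type*} [CommRing R] (I : Ideal R) : ℕ∞ :=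
  ⨅ (P : PrimeSpectrum R) (_ : I ≤ P.asIdeal), Order.height P

/-- A parameter ideal: an ideal generated by `ht I` elements. -/
def IsParameterIdeal {R : Type*} [CommRing R] (I : Ideal R) : Prop :=
  ∃ n : ℕ, idealHeight I = n ∧ ∃ x : Fin n → R, I = Ideal.span (Set.range x)

/-- A local ring is F-rational if every parameter ideal is tightly closed. -/
def FRationalLocal (R : Type*) [CommRing R] [IsLocalRing R] (p : ℕ) : Prop :=
  ∀ I : Ideal R, IsParameterIdeal I → tightClosure p I = ↑I

/-- A Cohen–Macaulay local ring: every full system of parameters `x₁, …, x_d`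
(`d = dim B`) is a regular sequence, i.e. `(x₁, …, xᵢ) : xᵢ₊₁ = (x₁, …, xᵢ)`. -/
def IsCohenMacaulayLocalRing (B : Type*) [CommRing B] [IsLocalRing B] : Prop :=
  ∀ d : ℕ, ringKrullDim B = d →
    ∀ x : Fin d → B, (∀ i, x i ∈ IsLocalRing.maximalIdeal B) →
      (Ideal.span (Set.range x)).radical = IsLocalRing.maximalIdeal B →
      ∀ i : Fin d,
        Submodule.colon (Ideal.span (x '' {j | (j : ℕ) < (i : ℕ)})) (Ideal.span {x i}) =
          Ideal.span (x '' {j | (j : ℕ) < (i : ℕ)})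

/-- The length `ℓ_R M` of a module, as an extended natural number: the supremum of the
lengths of chains of submodules below `⊤`. -/
noncomputable def moduleLength (R M : Type*) [Ring R] [AddCommGroup M] [Module R M] : ℕ∞ :=
  Order.height (⊤ : Submodule R M)

/-- The Frobenius endomorphism `x ↦ x ^ p`, as a ring homomorphism, in prime
characteristic `p`. -/
noncomputable def frobeniusRingHom (R : Type*) [CommRing R] (p : ℕ) [Fact p.Prime] [CharP R p] :
    R →+* R :=
  frobenius R p

/-!
Write `λ_e = ℓ(R/𝔪^{[p^e]})`. Every length computation rests on the exact sequence
`0 → R/(I : x) → R/I → R/(I + xR) → 0`. Filtering by colon ideals gives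
`ℓ(S/JS) ≤ ℓ(S/𝔪S) · ℓ(R/J)` along any `R → S`, so `λ` is submultiplicative, and a chain of `d + 1`
primes gives `λ_{e+c} ≥ p^{ed}` for a constant `c`; together these force `λ_e ≥ p^{ed}`. Hence
`λ_1 = p^d` implies `λ_e = p^{ed}` for all `e`. In that case the inequality for Frobenius is an
equality on `𝔪^{[p^e]}`, hence on every `𝔪`-primary ideal, so Frobenius commutes with colons of
`𝔪`-primary ideals, and by Artin–Rees and Krull with all colons `(I : x)`: it is flat.

Conversely, flatness preserves Lech independence, so the `p^e`-th powers of the `n` minimal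
generators of `𝔪` are independent and `λ_e ≥ p^{en}`. A system of parameters gives
`λ_e ≤ C · p^{ed}`, whence `n ≤ d`.
-/

namespace Kunz

section Colength

variable {R : Type*} [CommRing R]

/-- The colength `ℓ_R(R/I)` of an ideal `I`. -/
noncomputable abbrev colength (I : Ideal R) : ℕ∞ := Module.length R (R ⧸ I)

theorem colength_antitone : Antitone (colength : Ideal R → ℕ∞) := fun _ _ h =>
  Module.length_le_of_surjective (Submodule.factor h) (Submodule.factor_surjective h)

theorem colength_maximalIdeal [IsLocalRing R] : colength (maximalIdeal R) = 1 :=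
  Module.length_eq_one_iff.2 <|
    isSimpleModule_iff_isCoatom.2 (Ideal.isMaximal_def.1 inferInstance)

theorem colength_eq_add (I : Ideal R) (x : R) :
    colength I = colength (I.colon {x}) + colength (I ⊔ Ideal.span {x}) := by
  have hcolon : I.colon {x} = Submodule.comap (LinearMap.toSpanSingleton R R x) I := by
    ext a
    exact Submodule.mem_colon_singleton
  refine Module.length_eq_add_of_exact (Submodule.mapQ (I.colon {x}) I _ hcolon.le)
    (Submodule.factor (le_sup_left : I ≤ I ⊔ Ideal.span {x})) ?_ (Submodule.factor_surjective _) ?_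
  · rw [← LinearMap.ker_eq_bot, Submodule.ker_mapQ, ← hcolon, Submodule.mkQ_map_self]
  · rw [LinearMap.exact_iff, Submodule.range_mapQ, Submodule.factor, Submodule.ker_mapQ,
      LinearMap.range_toSpanSingleton, Submodule.comap_id, Submodule.map_sup,
      Submodule.mkQ_map_self, bot_sup_eq]

theorem colength_sup_span_mul_le (J : Ideal R) (a b : R) :
    colength (J ⊔ Ideal.span {a * b}) ≤
      colength (J ⊔ Ideal.span {a}) + colength (J ⊔ Ideal.span {b}) := by
  rw [colength_eq_add (J ⊔ Ideal.span {a * b}) a, add_comm]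
  gcongr <;> apply colength_antitone
  · exact sup_le_sup_right le_sup_left _
  · refine sup_le (le_sup_left.trans Ideal.le_colon) ?_
    rw [Ideal.span_singleton_le_iff_mem, Submodule.mem_colon_singleton, smul_eq_mul, mul_comm b]
    exact Ideal.mem_sup_right (Ideal.mem_span_singleton_self _)

theorem colength_sup_span_pow_le (J : Ideal R) (a : R) (n : ℕ) :
    colength (J ⊔ Ideal.span {a ^ n}) ≤ n * colength (J ⊔ Ideal.span {a}) := by
  induction n with
  | zero => simp
  | succ n ih =>
    rw [pow_succ, Nat.cast_succ, add_mul, one_mul]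
    exact (colength_sup_span_mul_le J _ a).trans (add_le_add_left ih _)

theorem colength_sup_span_image_pow_le {ι : Type*} (s : Finset ι) (x : ι → R) (a : ι → ℕ)
    (J : Ideal R) :
    colength (J ⊔ Ideal.span ((fun i => x i ^ a i) '' s)) ≤
      (∏ i ∈ s, (a i : ℕ∞)) * colength (J ⊔ Ideal.span (x '' s)) := by
  classical
  induction s using Finset.induction_on generalizing J with
  | empty => simp
  | insert j s hj ih =>
    simp only [Finset.coe_insert, Set.image_insert_eq, Ideal.span_insert, ← sup_assoc,
      Finset.prod_insert hj]
    refine (ih _).trans ?_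
    rw [mul_comm (a j : ℕ∞), mul_assoc, sup_right_comm J (Ideal.span {x j ^ a j}),
      sup_right_comm J (Ideal.span {x j})]
    exact mul_right_mono (colength_sup_span_pow_le _ (x j) (a j))

theorem eq_of_le_of_colength_le {I J : Ideal R} (hle : I ≤ J) (hlen : colength I ≤ colength J)
    (hI : colength I ≠ ⊤) : I = J := by
  simp only [colength, Module.length_quotient] at hlen hI
  by_contra hne
  exact hlen.not_gt (Order.coheight_strictAnti (hle.lt_of_ne hne)
    ((Order.coheight_anti hle).trans_lt hI.lt_top))

end Colength

theorem map_colon_le {R S : Type*} [CommRing R] [CommRing S] (φ : R →+* S) (I : Ideal R) (x : R) :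
    (I.colon {x}).map φ ≤ (I.map φ).colon {φ x} := by
  refine Ideal.map_le_iff_le_comap.2 fun a ha => Submodule.mem_colon_singleton.2 ?_
  rw [smul_eq_mul, ← map_mul]
  exact Ideal.mem_map_of_mem φ (Submodule.mem_colon_singleton.1 ha)

section LocalRing

variable {R : Type*} [CommRing R] [IsLocalRing R]

theorem exists_mem_colon_eq_maximalIdeal {I J : Ideal R} {k : ℕ} (hIJ : ¬ I ≤ J)
    (hk : maximalIdeal R ^ k ≤ J) :
    ∃ x ∈ I, J.colon {x} = maximalIdeal R := by
  classical
  have hex : ∃ j, maximalIdeal R ^ j * I ≤ J := ⟨k, Ideal.mul_le_left.trans hk⟩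
  obtain ⟨j, hj⟩ : ∃ j, Nat.find hex = j + 1 := Nat.exists_eq_succ_of_ne_zero fun h0 =>
    hIJ (by simpa [h0] using Nat.find_spec hex)
  have hsucc : maximalIdeal R * (maximalIdeal R ^ j * I) ≤ J := by
    simpa only [hj, pow_succ', mul_assoc] using Nat.find_spec hex
  obtain ⟨x, hx, hxJ⟩ := Set.not_subset.1 (Nat.find_min hex (by omega : j < Nat.find hex))
  refine ⟨x, Ideal.mul_le_right hx,
    ((maximalIdeal.isMaximal R).eq_of_le (fun htop => hxJ ?_) fun a ha => ?_).symm⟩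
  · simpa using htop
  · exact Submodule.mem_colon_singleton.2 (hsucc (Ideal.mul_mem_mul ha hx))

theorem induction_of_colon_eq_maximalIdeal [IsNoetherianRing R] {I : Ideal R}
    {motive : Ideal R → Prop} (base : motive I)
    (step : ∀ (J : Ideal R) (x : R), J.colon {x} = maximalIdeal R →
      motive (J ⊔ Ideal.span {x}) → motive J)
    {J : Ideal R} (hJI : J ≤ I) {k : ℕ} (hk : maximalIdeal R ^ k ≤ J) : motive J := by
  induction J using WellFoundedGT.induction with
  | _ J ih =>
    by_cases hIJ : I ≤ J
    · exact hJI.antisymm hIJ ▸ base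
    obtain ⟨x, hxI, hcolon⟩ := exists_mem_colon_eq_maximalIdeal hIJ hk
    have hxJ : x ∉ J := fun hx => (maximalIdeal.isMaximal R).ne_top <|
      hcolon ▸ (Submodule.colon_eq_top_iff_subset _).2 (Set.singleton_subset_iff.2 hx)
    exact step J x hcolon <| ih _ (Submodule.lt_sup_iff_notMem.2 hxJ)
      (sup_le hJI ((Ideal.span_singleton_le_iff_mem _).2 hxI)) (hk.trans le_sup_left)

variable [IsNoetherianRing R]

theorem colength_ne_top {J : Ideal R} {k : ℕ} (hk : maximalIdeal R ^ k ≤ J) :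
    colength J ≠ ⊤ := by
  refine induction_of_colon_eq_maximalIdeal (motive := fun J => colength J ≠ ⊤) (by simp) ?_
    le_top hk
  intro J x hcolon hsup
  rw [colength_eq_add J x, hcolon, colength_maximalIdeal]
  exact WithTop.add_ne_top.2 ⟨ENat.one_ne_top, hsup⟩

section Map

variable {S : Type*} [CommRing S] (φ : R →+* S) {I J : Ideal R} {k : ℕ}

/-- The additive form of `ℓ(IS/JS) ≤ ℓ(S/𝔪S) · ℓ(I/J)`: each step of a composition series of `I/J`
contributes a quotient of `S/𝔪S`. -/
theorem colength_map_add_le (hJI : J ≤ I) (hk : maximalIdeal R ^ k ≤ J) :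
    colength (J.map φ) + colength ((maximalIdeal R).map φ) * colength I ≤
      colength (I.map φ) + colength ((maximalIdeal R).map φ) * colength J := by
  set c := colength ((maximalIdeal R).map φ)
  refine induction_of_colon_eq_maximalIdeal (motive := fun J =>
    colength (J.map φ) + c * colength I ≤ colength (I.map φ) + c * colength J) le_rfl ?_ hJI hk
  intro J x hcolon ih
  rw [Ideal.map_sup, Ideal.map_span, Set.image_singleton] at ih
  have hc : colength ((J.map φ).colon {φ x}) ≤ c :=
    colength_antitone (hcolon ▸ map_colon_le φ J x)
  rw [colength_eq_add J x, hcolon, colength_maximalIdeal, colength_eq_add (J.map φ) (φ x)]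
  calc _ = colength ((J.map φ).colon {φ x}) +
        (colength (J.map φ ⊔ Ideal.span {φ x}) + c * colength I) := add_assoc _ _ _
    _ ≤ c + (colength (I.map φ) + c * colength (J ⊔ Ideal.span {x})) := add_le_add hc ih
    _ = _ := by ring

theorem colength_map_le (hk : maximalIdeal R ^ k ≤ J) :
    colength (J.map φ) ≤ colength ((maximalIdeal R).map φ) * colength J := by
  simpa [Ideal.map_top] using colength_map_add_le φ le_top hk

theorem colength_map_eq_of_le (hJI : J ≤ I) (hk : maximalIdeal R ^ k ≤ J)
    (hJ : colength (J.map φ) = colength ((maximalIdeal R).map φ) * colength J)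
    (hJ_ne_top : colength (J.map φ) ≠ ⊤) :
    colength (I.map φ) = colength ((maximalIdeal R).map φ) * colength I := by
  refine (colength_map_le φ (hk.trans hJI)).antisymm ?_
  have hadd := colength_map_add_le φ hJI hk
  rw [← hJ, add_comm (colength (I.map φ))] at hadd
  exact (ENat.add_le_add_iff_left hJ_ne_top).1 hadd

end Map

end LocalRing

section ArtinRees

variable {R : Type*} [CommRing R] [IsNoetherianRing R]

theorem exists_colon_sup_pow_le (𝔞 I : Ideal R) (x : R) :
    ∃ c, ∀ n, (I ⊔ 𝔞 ^ (n + c)).colon {x} ≤ I.colon {x} ⊔ 𝔞 ^ n := by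
  obtain ⟨c, hc⟩ := Ideal.exists_pow_inf_eq_pow_smul 𝔞 (I ⊔ Ideal.span {x})
  refine ⟨c, fun n a ha => ?_⟩
  obtain ⟨i, hi, u, hu, hiu⟩ := Submodule.mem_sup.1 (Submodule.mem_colon_singleton.1 ha)
  have hu_mem : u ∈ 𝔞 ^ (n + c) • ⊤ ⊓ (I ⊔ Ideal.span {x}) := by
    refine ⟨by simpa using hu, ?_⟩
    rw [← add_sub_cancel_left i u, hiu]
    exact sub_mem (Ideal.mem_sup_right (Ideal.mul_mem_left _ a (Ideal.mem_span_singleton_self x)))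
      (Ideal.mem_sup_left hi)
  have hu_mul : u ∈ 𝔞 ^ n * I ⊔ 𝔞 ^ n * Ideal.span {x} := by
    rw [hc _ (Nat.le_add_left c n), Nat.add_sub_cancel] at hu_mem
    exact Ideal.mul_sup (𝔞 ^ n) I _ ▸ Ideal.mul_mono_right inf_le_right hu_mem
  obtain ⟨j, hj, _, hbx, rfl⟩ := Submodule.mem_sup.1 hu_mul
  obtain ⟨b, hb, rfl⟩ := Ideal.mem_mul_span_singleton.1 hbx
  refine Submodule.mem_sup.2 ⟨a - b, Submodule.mem_colon_singleton.2 ?_, b, hb, sub_add_cancel a b⟩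
  have hij : (a - b) • x = i + j := by linear_combination -hiu
  exact hij ▸ I.add_mem hi (Ideal.mul_le_right hj)

theorem exists_colength_sup_pow_add_le {P Q : Ideal R} [P.IsPrime] (hPQ : P < Q) (𝔞 : Ideal R) :
    ∃ c, ∀ n, colength (P ⊔ 𝔞 ^ n) + colength (Q ⊔ 𝔞 ^ (n + c)) ≤
      colength (P ⊔ 𝔞 ^ (n + c)) := by
  obtain ⟨x, hxQ, hxP⟩ := Set.exists_of_ssubset hPQ
  have hcolon : P.colon {x} ≤ P := fun a ha =>
    (Ideal.IsPrime.mem_or_mem ‹_› (Submodule.mem_colon_singleton.1 ha)).resolve_right hxP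
  obtain ⟨c, hc⟩ := exists_colon_sup_pow_le 𝔞 P x
  refine ⟨c, fun n => ?_⟩
  rw [colength_eq_add (P ⊔ 𝔞 ^ (n + c)) x]
  gcongr <;> apply colength_antitone
  · exact (hc n).trans (sup_le_sup_right hcolon _)
  · rw [sup_right_comm]
    exact sup_le_sup_right (sup_le hPQ.le ((Ideal.span_singleton_le_iff_mem _).2 hxQ)) _

theorem exists_mul_colength_sup_pow_le {P Q : Ideal R} [P.IsPrime] (hPQ : P < Q) (𝔞 : Ideal R) :
    ∃ c, ∀ k n : ℕ, k * colength (Q ⊔ 𝔞 ^ n) ≤ colength (P ⊔ 𝔞 ^ (n + k * c)) := by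
  obtain ⟨c, hc⟩ := exists_colength_sup_pow_add_le hPQ 𝔞
  refine ⟨c, fun k n => ?_⟩
  induction k with
  | zero => simp
  | succ k ih =>
    have hpow : 𝔞 ^ (n + k * c + c) ≤ 𝔞 ^ n := Ideal.pow_le_pow_right (by omega)
    rw [Nat.cast_succ, add_mul, one_mul, add_one_mul, ← add_assoc]
    exact (add_le_add ih (colength_antitone (sup_le_sup_left hpow Q))).trans (hc _)

theorem exists_pow_le_colength_sup_maximalIdeal_pow [IsLocalRing R] {d : ℕ} (P : PrimeSpectrum R)
    (hd : d ≤ Order.coheight P) :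
    ∃ c : ℕ, ∀ n : ℕ, 0 < n → (n : ℕ∞) ^ d ≤ colength (P.asIdeal ⊔ maximalIdeal R ^ (c * n)) := by
  induction d generalizing P with
  | zero =>
    refine ⟨1, fun n hn => ?_⟩
    rw [pow_zero, ← colength_maximalIdeal (R := R)]
    exact colength_antitone
      (sup_le (le_maximalIdeal P.2.ne_top) (Ideal.pow_le_self (by omega)))
  | succ d ih =>
    obtain ⟨Q, hPQ, hQ⟩ : ∃ Q > P, d ≤ Order.coheight Q := by
      by_contra! hlt
      refine (Order.coheight_le_coe_iff.2 fun Q hQ => hlt Q hQ).not_gt ?_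
      exact (Nat.cast_lt.2 d.lt_succ_self).trans_le hd
    obtain ⟨c, hc⟩ := ih Q hQ
    obtain ⟨c', hc'⟩ := exists_mul_colength_sup_pow_le (P := P.asIdeal) hPQ (maximalIdeal R)
    refine ⟨c + c', fun n hn => ?_⟩
    calc (n : ℕ∞) ^ (d + 1) = n * (n : ℕ∞) ^ d := pow_succ' _ _
      _ ≤ n * colength (Q.asIdeal ⊔ maximalIdeal R ^ (c * n)) := mul_right_mono (hc n hn)
      _ ≤ colength (P.asIdeal ⊔ maximalIdeal R ^ (c * n + n * c')) := hc' n (c * n)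
      _ = colength (P.asIdeal ⊔ maximalIdeal R ^ ((c + c') * n)) := by rw [add_mul, mul_comm n]

end ArtinRees

section Lech

/-- A finite family `f` is independent in the sense of Lech if the coefficients of every linear
relation among the `f i` lie in the ideal generated by the `f i`; equivalently, `I/I²` is free over
`R/I` on the classes of the `f i`, where `I` is that ideal. -/
def LechIndependent {R ι : Type*} [CommRing R] [Fintype ι] (f : ι → R) : Prop :=
  ∀ a : ι → R, ∑ i, a i * f i = 0 → ∀ i, a i ∈ Ideal.span (Set.range f)

variable {R ι : Type*} [CommRing R] [DecidableEq ι] {f : ι → R} {j : ι} {g h : R}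

theorem mem_span_range_update (f : ι → R) (j : ι) (g : R) :
    g ∈ Ideal.span (Set.range (Function.update f j g)) :=
  Ideal.subset_span ⟨j, Function.update_self j g f⟩

theorem span_range_le_span_range_update (hg : g ∣ f j) :
    Ideal.span (Set.range f) ≤ Ideal.span (Set.range (Function.update f j g)) := by
  refine Ideal.span_le.2 (Set.range_subset_iff.2 fun i => ?_)
  rcases eq_or_ne i j with rfl | hij
  · exact Ideal.mem_of_dvd _ hg (mem_span_range_update f i g)
  · exact Ideal.subset_span ⟨i, Function.update_of_ne hij g f⟩

variable [Fintype ι]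

theorem sum_update_mul (a f : ι → R) (j : ι) (u : R) :
    ∑ i, Function.update a j u i * f i = ∑ i, a i * f i + (u - a j) * f j := by
  have hterm (i : ι) : Function.update a j u i * f i =
      a i * f i + if i = j then (u - a j) * f j else 0 := by
    rcases eq_or_ne i j with rfl | hij
    · simp only [Function.update_self, if_true]
      ring
    · simp [hij]
  simp [hterm, Finset.sum_add_distrib]

namespace LechIndependent

theorem update (hf : LechIndependent f) (hg : g ∣ f j) :
    LechIndependent (Function.update f j g) := by
  intro a ha
  have hle := span_range_le_span_range_update hg
  obtain ⟨h, hgh⟩ := hg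
  have hrel : ∑ i, a i * f i + a j * (g - f j) = 0 := by
    simp only [← ha, mul_comm (a _), sum_update_mul]
  have haj : a j ∈ Ideal.span (Set.range f) := by
    have hmem := hf (Function.update (h • a) j (a j)) ?_ j
    · simpa only [Function.update_self] using hmem
    simp only [sum_update_mul, Pi.smul_apply, smul_eq_mul, mul_assoc, ← Finset.mul_sum]
    linear_combination h * hrel + a j * hgh
  obtain ⟨b, hb⟩ := Ideal.mem_span_range_iff_exists_fun.1 haj
  intro i
  rcases eq_or_ne i j with rfl | hij
  · exact hle haj
  have hmem := hf (Function.update (a + g • b) j (g * b j)) ?_ i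
  · rw [Function.update_of_ne hij] at hmem
    exact (Ideal.add_mem_iff_left _
      (Ideal.mul_mem_right _ _ (mem_span_range_update f j g))).1 (hle hmem)
  simp only [sum_update_mul, Pi.add_apply, Pi.smul_apply, smul_eq_mul, add_mul, mul_assoc,
    Finset.sum_add_distrib, ← Finset.mul_sum, hb]
  linear_combination hrel

theorem piecewise (hf : LechIndependent f) {g : ι → R} (hg : ∀ i, g i ∣ f i) (s : Finset ι) :
    LechIndependent (s.piecewise g f) := by
  induction s using Finset.induction_on with
  | empty => simpa using hf
  | insert j s hj ih =>
    rw [Finset.piecewise_insert]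
    exact ih.update (by simpa [hj] using hg j)

theorem colon_le (hf : LechIndependent f) (hj : f j = g * h) :
    (Ideal.span (Set.range f)).colon {g} ≤ Ideal.span (Set.range (Function.update f j h)) := by
  intro a ha
  obtain ⟨b, hb⟩ := Ideal.mem_span_range_iff_exists_fun.1 (Submodule.mem_colon_singleton.1 ha)
  rw [smul_eq_mul] at hb
  have hmem := hf (Function.update (-h • b) j (a - b j * h)) ?_ j
  · rw [Function.update_self] at hmem
    exact (Submodule.sub_mem_iff_left _
      (Ideal.mul_mem_left _ _ (mem_span_range_update f j h))).1
        (span_range_le_span_range_update (Dvd.intro_left g hj.symm) hmem)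
  simp only [sum_update_mul, Pi.smul_apply, smul_eq_mul, mul_assoc, ← Finset.mul_sum, hb]
  linear_combination a * hj

theorem colength_update_add_le (hf : LechIndependent f) (hj : f j = g * h) :
    colength (Ideal.span (Set.range (Function.update f j g))) +
      colength (Ideal.span (Set.range (Function.update f j h))) ≤
        colength (Ideal.span (Set.range f)) := by
  rw [colength_eq_add (Ideal.span (Set.range f)) g, add_comm]
  refine add_le_add (colength_antitone (hf.colon_le hj)) (colength_antitone (sup_le ?_ ?_))
  · exact span_range_le_span_range_update (Dvd.intro h hj.symm)
  · exact (Ideal.span_singleton_le_iff_mem _).2 (mem_span_range_update f j g)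

theorem mul_colength_update_le (hf : LechIndependent f) {y : R} {n : ℕ} (hj : f j = y ^ n) :
    n * colength (Ideal.span (Set.range (Function.update f j y))) ≤
      colength (Ideal.span (Set.range f)) := by
  induction n generalizing f with
  | zero => simp
  | succ n ih =>
    have hj : f j = y ^ n * y := hj.trans (pow_succ y n)
    have hpow := ih (hf.update (Dvd.intro y hj.symm)) (Function.update_self j (y ^ n) f)
    rw [Function.update_idem] at hpow
    rw [Nat.cast_succ, add_mul, one_mul]
    exact (add_le_add_left hpow _).trans (hf.colength_update_add_le hj)

end LechIndependent

end Lech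

theorem LechIndependent.prod_mul_colength_le {R ι : Type*} [CommRing R] [Fintype ι] {x : ι → R}
    {a : ι → ℕ} (ha : ∀ i, a i ≠ 0) (hx : LechIndependent fun i => x i ^ a i) :
    (∏ i, (a i : ℕ∞)) * colength (Ideal.span (Set.range x)) ≤
      colength (Ideal.span (Set.range fun i => x i ^ a i)) := by
  classical
  suffices hs : ∀ s : Finset ι, (∏ i ∈ s, (a i : ℕ∞)) *
      colength (Ideal.span (Set.range (s.piecewise x fun i => x i ^ a i))) ≤
        colength (Ideal.span (Set.range fun i => x i ^ a i)) by
    simpa using hs Finset.univ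
  intro s
  induction s using Finset.induction_on with
  | empty => simp
  | insert j s hj ih =>
    rw [Finset.prod_insert hj, mul_comm (a j : ℕ∞), mul_assoc, Finset.piecewise_insert]
    have hs := hx.piecewise (fun i => dvd_pow_self (x i) (ha i)) s
    exact (mul_right_mono (hs.mul_colength_update_le (by simp [hj]))).trans ih

section FlatnessCriterion

variable {R M : Type*} [CommRing R] [AddCommGroup M] [Module R M]

/-- The multiplication map `I ⊗ M → M`, whose injectivity for all `I` is flatness of `M`. -/
noncomputable def idealTensorLift (I : Ideal R) (M : Type*) [AddCommGroup M] [Module R M] :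
    I ⊗[R] M →ₗ[R] M :=
  TensorProduct.lift ((LinearMap.lsmul R M).comp I.subtype)

theorem idealTensorLift_tmul {I : Ideal R} (a : I) (m : M) :
    idealTensorLift I M (a ⊗ₜ m) = (a : R) • m := rfl

theorem idealTensorLift_rTensor_inclusion {I J : Ideal R} (hIJ : I ≤ J) (w : I ⊗[R] M) :
    idealTensorLift J M ((Submodule.inclusion hIJ).rTensor M w) = idealTensorLift I M w :=
  LinearMap.congr_fun (TensorProduct.ext' fun _ _ => rfl :
    idealTensorLift J M ∘ₗ (Submodule.inclusion hIJ).rTensor M = idealTensorLift I M) w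

theorem idealTensorLift_mem_smul_top {I : Ideal R} (w : I ⊗[R] M) :
    idealTensorLift I M w ∈ (I • ⊤ : Submodule R M) := by
  induction w with
  | zero => simp
  | tmul a m => exact Submodule.smul_mem_smul a.2 trivial
  | add v w hv hw => exact map_add (idealTensorLift I M) v w ▸ add_mem hv hw

theorem exists_eq_rTensor_inclusion_add_tmul {I J : Ideal R} (hIJ : I ≤ J) {x : J}
    (hJ : J ≤ I ⊔ Ideal.span {(x : R)}) (z : J ⊗[R] M) :
    ∃ w m, z = (Submodule.inclusion hIJ).rTensor M w + x ⊗ₜ[R] m := by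
  induction z with
  | zero => exact ⟨0, 0, by simp⟩
  | add y z hy hz =>
    obtain ⟨v, m, rfl⟩ := hy
    obtain ⟨w, n, rfl⟩ := hz
    exact ⟨v + w, m + n, by rw [map_add, TensorProduct.tmul_add]; abel⟩
  | tmul y m =>
    obtain ⟨i, hi, _, hrx, hy⟩ := Submodule.mem_sup.1 (hJ y.2)
    obtain ⟨r, rfl⟩ := Ideal.mem_span_singleton'.1 hrx
    obtain rfl : y = Submodule.inclusion hIJ ⟨i, hi⟩ + r • x := Subtype.ext hy.symm
    exact ⟨⟨i, hi⟩ ⊗ₜ m, r • m, by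
      rw [TensorProduct.add_tmul, TensorProduct.smul_tmul, LinearMap.rTensor_tmul]⟩

theorem tmul_mem_range_rTensor_inclusion {I J : Ideal R} (hIJ : I ≤ J) (x : J) {m : M}
    (hm : m ∈ (I.colon {(x : R)} • ⊤ : Submodule R M)) :
    x ⊗ₜ[R] m ∈ LinearMap.range ((Submodule.inclusion hIJ).rTensor M) := by
  refine Submodule.smul_induction_on hm (fun c hc n _ => ?_) fun m n hm hn => ?_
  · refine ⟨⟨c • (x : R), Submodule.mem_colon_singleton.1 hc⟩ ⊗ₜ n, ?_⟩
    rw [LinearMap.rTensor_tmul, TensorProduct.tmul_smul, TensorProduct.smul_tmul']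
    rfl
  · rw [TensorProduct.tmul_add]
    exact add_mem hm hn

theorem idealTensorLift_injective_of_le_sup {I J : Ideal R} (hIJ : I ≤ J) {x : J}
    (hJ : J ≤ I ⊔ Ideal.span {(x : R)})
    (hcolon : ∀ m : M, (x : R) • m ∈ (I • ⊤ : Submodule R M) →
      m ∈ (I.colon {(x : R)} • ⊤ : Submodule R M))
    (hI : Function.Injective (idealTensorLift I M)) :
    Function.Injective (idealTensorLift J M) := by
  refine (injective_iff_map_eq_zero _).2 fun z hz => ?_
  obtain ⟨v, m, rfl⟩ := exists_eq_rTensor_inclusion_add_tmul hIJ hJ z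
  have hxm : (x : R) • m ∈ (I • ⊤ : Submodule R M) := by
    rw [map_add, idealTensorLift_rTensor_inclusion, idealTensorLift_tmul] at hz
    exact eq_neg_of_add_eq_zero_right hz ▸ neg_mem (idealTensorLift_mem_smul_top v)
  obtain ⟨w, hw⟩ := tmul_mem_range_rTensor_inclusion hIJ x (hcolon m hxm)
  rw [← hw, ← map_add] at hz ⊢
  rw [idealTensorLift_rTensor_inclusion] at hz
  rw [(injective_iff_map_eq_zero _).1 hI _ hz, map_zero]

theorem flat_of_smul_mem_imp_mem_colon
    (h : ∀ (I : Ideal R) (x : R) (m : M), x • m ∈ (I • ⊤ : Submodule R M) →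
      m ∈ (I.colon {x} • ⊤ : Submodule R M)) :
    Module.Flat R M := by
  classical
  refine Module.Flat.iff_lift_lsmul_comp_subtype_injective.2 fun I hI => ?_
  change Function.Injective (idealTensorLift I M)
  obtain ⟨s, rfl⟩ := hI
  induction s using Finset.induction_on with
  | empty =>
    rw [Finset.coe_empty, Ideal.span_empty]
    exact Function.injective_of_subsingleton _
  | insert x s _ ih =>
    have hspan : Ideal.span (insert x s : Finset R) = Ideal.span s ⊔ Ideal.span {x} := by
      rw [Finset.coe_insert, Ideal.span_insert, sup_comm]
    have hx : x ∈ Ideal.span (insert x s : Finset R) :=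
      Ideal.subset_span (Finset.mem_insert_self x s)
    exact idealTensorLift_injective_of_le_sup (x := ⟨x, hx⟩) (hspan ▸ le_sup_left) hspan.le
      (h _ x) ih

end FlatnessCriterion

section RingHom

variable {R S : Type*} [CommRing R] [CommRing S] {φ : R →+* S}

theorem LechIndependent.map_of_flat {ι : Type*} [Fintype ι] {x : ι → R} (hx : LechIndependent x)
    (hφ : φ.Flat) : LechIndependent (φ ∘ x) := by
  intro a ha i
  algebraize [φ]
  obtain ⟨k, b, y, hay, hb⟩ : Module.IsTrivialRelation x a :=
    Module.Flat.isTrivialRelation_of_sum_smul_eq_zero <|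
      (Finset.sum_congr rfl fun i _ => mul_comm (φ (x i)) (a i)).trans ha
  rw [Set.range_comp, ← Ideal.map_span, hay i]
  refine Ideal.sum_mem _ fun j _ => ?_
  have hbij : b i j ∈ Ideal.span (Set.range x) :=
    hx (b · j) (by simpa only [mul_comm] using hb j) i
  rw [Algebra.smul_def]
  exact Ideal.mul_mem_right _ _ (Ideal.mem_map_of_mem φ hbij)

theorem flat_of_colon_map_le
    (h : ∀ (I : Ideal R) (x : R), (I.map φ).colon {φ x} ≤ (I.colon {x}).map φ) : φ.Flat := by
  algebraize [φ]
  refine flat_of_smul_mem_imp_mem_colon fun I x s hs => ?_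
  rw [Ideal.smul_top_eq_map, Submodule.restrictScalars_mem] at hs ⊢
  refine h I x (Submodule.mem_colon_singleton.2 ?_)
  rwa [Algebra.smul_def, mul_comm] at hs

theorem colon_map_le_of_colength_map_eq_mul {I : Ideal R} {x : R} {c : ℕ∞}
    (hI : colength (I.map φ) = c * colength I)
    (hcolon : colength ((I.colon {x}).map φ) = c * colength (I.colon {x}))
    (hsup : colength ((I ⊔ Ideal.span {x}).map φ) = c * colength (I ⊔ Ideal.span {x}))
    (hfin : colength (I.map φ) ≠ ⊤) :
    (I.map φ).colon {φ x} ≤ (I.colon {x}).map φ := by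
  have hadd : colength (I.map φ) =
      colength ((I.map φ).colon {φ x}) + colength ((I ⊔ Ideal.span {x}).map φ) := by
    rw [Ideal.map_sup, Ideal.map_span, Set.image_singleton, ← colength_eq_add]
  have hmul : colength (I.map φ) =
      colength ((I.colon {x}).map φ) + colength ((I ⊔ Ideal.span {x}).map φ) := by
    rw [hI, hcolon, hsup, colength_eq_add I x, mul_add]
  obtain ⟨hcolon_fin, hsup_fin⟩ := WithTop.add_ne_top.1 (hmul ▸ hfin)
  have hlen : colength ((I.colon {x}).map φ) = colength ((I.map φ).colon {φ x}) :=
    WithTop.add_right_cancel hsup_fin (hmul.symm.trans hadd)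
  exact (eq_of_le_of_colength_le (map_colon_le φ I x) hlen.le hcolon_fin).ge

theorem mem_of_forall_mem_sup_pow [IsLocalRing S] [IsNoetherianRing S] {J : Ideal S} {a : S}
    (h : ∀ n, a ∈ J ⊔ maximalIdeal S ^ n) : a ∈ J := by
  have hbot : ⨅ n, maximalIdeal S ^ n • (⊤ : Submodule S (S ⧸ J)) = ⊥ :=
    Ideal.iInf_pow_smul_eq_bot_of_isLocalRing _ (maximalIdeal.isMaximal S).ne_top
  rw [← Submodule.Quotient.mk_eq_zero, ← Submodule.mem_bot S, ← hbot, Submodule.mem_iInf]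
  intro n
  obtain ⟨y, hy, u, hu, rfl⟩ := Submodule.mem_sup.1 (h n)
  rw [Submodule.Quotient.mk_add, (Submodule.Quotient.mk_eq_zero J).2 hy, zero_add,
    ← mul_one u, ← smul_eq_mul, Submodule.Quotient.mk_smul]
  exact Submodule.smul_mem_smul hu trivial

theorem flat_of_colength_map_eq_mul [IsLocalRing R] [IsNoetherianRing R] [IsLocalRing S]
    [IsNoetherianRing S] (hφ : (maximalIdeal R).map φ ≤ maximalIdeal S) {c : ℕ∞} (hc : c ≠ ⊤)
    (h : ∀ (I : Ideal R) (k : ℕ), maximalIdeal R ^ k ≤ I → colength (I.map φ) = c * colength I) :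
    φ.Flat := by
  refine flat_of_colon_map_le fun I x a ha => mem_of_forall_mem_sup_pow fun n => ?_
  obtain ⟨l, hl⟩ := exists_colon_sup_pow_le (maximalIdeal R) I x
  set J := I ⊔ maximalIdeal R ^ (n + l)
  have hJ : maximalIdeal R ^ (n + l) ≤ J := le_sup_right
  have hexact : (J.map φ).colon {φ x} ≤ (J.colon {x}).map φ :=
    colon_map_le_of_colength_map_eq_mul (h _ _ hJ) (h _ _ (hJ.trans Ideal.le_colon))
      (h _ _ (hJ.trans le_sup_left)) (h _ _ hJ ▸ WithTop.mul_ne_top hc (colength_ne_top hJ))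
  have hle : (J.colon {x}).map φ ≤ (I.colon {x}).map φ ⊔ maximalIdeal S ^ n :=
    calc (J.colon {x}).map φ ≤ (I.colon {x} ⊔ maximalIdeal R ^ n).map φ := Ideal.map_mono (hl n)
      _ ≤ (I.colon {x}).map φ ⊔ maximalIdeal S ^ n := by
        rw [Ideal.map_sup, Ideal.map_pow]
        exact sup_le_sup_left (Ideal.pow_right_mono hφ n) _
  exact hle (hexact (Submodule.colon_mono (Ideal.map_mono le_sup_left) subset_rfl ha))

end RingHom

theorem le_of_forall_pow_le_mul_pow {a b C : ℕ∞} (hC : C ≠ ⊤) (h : ∀ n : ℕ, a ^ n ≤ C * b ^ n) :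
    a ≤ b := by
  rcases eq_or_ne b ⊤ with rfl | hb
  · exact le_top
  have ha : a ≠ ⊤ := ((pow_one a ▸ h 1).trans_lt
    (WithTop.mul_ne_top hC ((pow_one b).symm ▸ hb)).lt_top).ne
  lift a to ℕ using ha
  lift b to ℕ using hb
  lift C to ℕ using hC
  norm_cast at h ⊢
  by_contra! hlt
  have hb_pos : 0 < b := Nat.pos_of_ne_zero fun hb => by simpa [hb, (hb ▸ hlt).ne'] using h 1
  have hb' : (0 : ℚ) < b := Nat.cast_pos.2 hb_pos
  obtain ⟨n, hn⟩ := pow_unbounded_of_one_lt (C : ℚ) ((one_lt_div hb').2 (Nat.cast_lt.2 hlt))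
  rw [div_pow, lt_div_iff₀ (pow_pos hb' n)] at hn
  exact (h n).not_gt (by exact_mod_cast hn)

section Generators

variable {R : Type*} [CommRing R] [IsLocalRing R]

theorem mem_maximalIdeal_of_sum_mul_eq_zero {ι : Type*} [Fintype ι] {x b : ι → R}
    (hx : Fintype.card ι ≤ (Ideal.span (Set.range x)).spanFinrank) (hb : ∑ i, b i * x i = 0)
    (i : ι) : b i ∈ maximalIdeal R := by
  classical
  by_contra hbi
  set s : Finset R := (Finset.univ.erase i).image x
  have hxi : x i ∈ Ideal.span (s : Set R) := by
    refine (Ideal.unit_mul_mem_iff_mem _ (notMem_maximalIdeal.1 hbi)).1 ?_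
    rw [← Finset.add_sum_erase _ _ (Finset.mem_univ i)] at hb
    rw [eq_neg_of_add_eq_zero_left hb]
    exact neg_mem (Ideal.sum_mem _ fun j hj => Ideal.mul_mem_left _ _
      (Ideal.subset_span (Finset.mem_coe.2 (Finset.mem_image_of_mem x hj))))
  have hspan : Ideal.span (Set.range x) = Ideal.span s := by
    refine le_antisymm (Ideal.span_le.2 (Set.range_subset_iff.2 fun j => ?_))
      (Ideal.span_mono fun y hy => ?_)
    · rcases eq_or_ne j i with rfl | hj
      · exact hxi
      · exact Ideal.subset_span (Finset.mem_coe.2 (Finset.mem_image_of_mem x (by simp [hj])))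
    · obtain ⟨j, -, rfl⟩ := Finset.mem_image.1 hy
      exact ⟨j, rfl⟩
  have hcard : (Ideal.span (s : Set R)).spanFinrank ≤ Fintype.card ι - 1 := by
    refine (Submodule.spanFinrank_span_le_ncard_of_finite s.finite_toSet).trans ?_
    rw [Set.ncard_coe_finset, ← Finset.card_univ, ← Finset.card_erase_of_mem (Finset.mem_univ i)]
    exact Finset.card_image_le
  have hpos : 0 < Fintype.card ι := Fintype.card_pos_iff.2 ⟨i⟩
  rw [hspan] at hx
  omega

variable [IsNoetherianRing R]

variable (R) in
theorem exists_finset_lechIndependent_span_eq_maximalIdeal :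
    ∃ s : Finset R, s.card = (maximalIdeal R).spanFinrank ∧
      Ideal.span (s : Set R) = maximalIdeal R ∧ LechIndependent ((↑) : s → R) := by
  obtain ⟨s, hcard, hspan⟩ := Submodule.FG.exists_span_finset_card_eq_spanFinrank
    (IsNoetherian.noetherian (maximalIdeal R))
  have hrange : Ideal.span (Set.range ((↑) : s → R)) = maximalIdeal R := by
    rw [Subtype.range_coe_subtype]
    exact hspan
  refine ⟨s, hcard, hspan, fun b hb i => ?_⟩
  rw [hrange]
  exact mem_maximalIdeal_of_sum_mul_eq_zero (by rw [hrange, Fintype.card_coe, hcard]) hb i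

theorem exists_finset_card_eq_colength_span_ne_top {d : ℕ} (hd : ringKrullDim R = d) :
    ∃ s : Finset R, s.card = d ∧ (s : Set R) ⊆ maximalIdeal R ∧
      colength (Ideal.span (s : Set R)) ≠ ⊤ := by
  obtain ⟨s, hmin, hcard⟩ :=
    Ideal.exists_finset_card_eq_height_of_isNoetherianRing (maximalIdeal R)
  have hheight : (maximalIdeal R).height = d := by
    rw [← WithBot.coe_inj, maximalIdeal_height_eq_ringKrullDim, hd]
    rfl
  have hrad : maximalIdeal R ≤ (Ideal.span (s : Set R)).radical := by
    rw [Ideal.radical_eq_sInf]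
    exact le_sInf fun Q ⟨hQ, hQ_prime⟩ => hmin.2 ⟨hQ_prime, hQ⟩ (le_maximalIdeal hQ_prime.ne_top)
  obtain ⟨k, hk⟩ := Ideal.exists_pow_le_of_le_radical_of_fg hrad (IsNoetherian.noetherian _)
  exact ⟨s, Nat.cast_inj.1 (hcard.trans hheight), Ideal.span_le.1 hmin.1.2, colength_ne_top hk⟩

theorem isRegularLocal_iff_spanFinrank_maximalIdeal_le {d : ℕ} (hd : ringKrullDim R = d) :
    IsRegularLocal R ↔ (maximalIdeal R).spanFinrank ≤ d := by
  refine ⟨?_, fun hle => ⟨inferInstance, d, ?_⟩⟩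
  · rintro ⟨-, n, x, hn, hx⟩
    obtain rfl : n = d := by exact_mod_cast hn.symm.trans hd
    rw [hx]
    refine (Submodule.spanFinrank_span_le_ncard_of_finite (Set.finite_range x)).trans ?_
    simpa [Nat.card_coe_set_eq] using Finite.card_range_le x
  · obtain ⟨s, hcard, hspan⟩ := Submodule.FG.exists_span_finset_card_eq_spanFinrank
      (IsNoetherian.noetherian (maximalIdeal R))
    have hge : d ≤ (maximalIdeal R).spanFinrank := by
      exact_mod_cast hd ▸ ringKrullDim_le_spanFinrank_maximalIdeal R
    let e := s.equivFinOfCardEq (hcard.trans (hle.antisymm hge))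
    refine ⟨(↑) ∘ e.symm, hd, ?_⟩
    rw [← hspan, e.symm.surjective.range_comp ((↑) : s → R), Subtype.range_coe_subtype]
    rfl

end Generators

section BracketPow

variable {R : Type*} [CommRing R] (I : Ideal R)

theorem bracketPow_le_pow (q : ℕ) : I.bracketPow q ≤ I ^ q :=
  Ideal.span_le.2 (Set.image_subset_iff.2 fun _ ha => Ideal.pow_mem_pow ha q)

theorem exists_pow_le_bracketPow [IsNoetherianRing R] (q : ℕ) : ∃ k, I ^ k ≤ I.bracketPow q :=
  Ideal.exists_pow_le_of_le_radical_of_fg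
    (fun _ ha => ⟨q, Ideal.subset_span (Set.mem_image_of_mem _ ha)⟩) (IsNoetherian.noetherian I)

variable (p : ℕ) [ExpChar R p]

theorem map_iterateFrobenius_eq_bracketPow (e : ℕ) :
    I.map (iterateFrobenius R p e) = I.bracketPow (p ^ e) := rfl

theorem map_iterateFrobenius_bracketPow (e e' : ℕ) :
    (I.bracketPow (p ^ e)).map (iterateFrobenius R p e') = I.bracketPow (p ^ (e + e')) := by
  rw [← map_iterateFrobenius_eq_bracketPow, Ideal.map_map, ← map_iterateFrobenius_eq_bracketPow,
    add_comm]
  congr 1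
  ext
  simp only [RingHom.comp_apply, iterateFrobenius_add_apply]

end BracketPow

theorem flat_iterateFrobenius {R : Type*} [CommRing R] {p : ℕ} [ExpChar R p]
    (h : (frobenius R p).Flat) (e : ℕ) : (iterateFrobenius R p e).Flat := by
  induction e with
  | zero => exact iterateFrobenius_zero R p ▸ RingHom.Flat.id R
  | succ e ih =>
    have hcomp : iterateFrobenius R p (e + 1) = (iterateFrobenius R p e).comp (frobenius R p) := by
      ext
      rw [iterateFrobenius_add_apply, iterateFrobenius_one, RingHom.comp_apply]
    exact hcomp ▸ h.comp ih

section HilbertKunz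

/-- The Hilbert–Kunz function `e ↦ ℓ(R/𝔪^{[p^e]})` of a local ring `R`. It takes the exponent `e`,
not the power `p ^ e`, as its argument. -/
noncomputable def hilbertKunz (R : Type*) [CommRing R] [IsLocalRing R] (p e : ℕ) : ℕ∞ :=
  colength ((maximalIdeal R).bracketPow (p ^ e))

variable {R : Type*} [CommRing R] [IsLocalRing R]

theorem hilbertKunz_le_of_subset (p e : ℕ) {s : Finset R} (hs : (s : Set R) ⊆ maximalIdeal R) :
    hilbertKunz R p e ≤ ((p : ℕ∞) ^ e) ^ s.card * colength (Ideal.span (s : Set R)) := by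
  have hle : Ideal.span ((fun a => a ^ p ^ e) '' (s : Set R)) ≤
      (maximalIdeal R).bracketPow (p ^ e) := Ideal.span_mono (Set.image_mono hs)
  refine (colength_antitone hle).trans ?_
  simpa using colength_sup_span_image_pow_le s id (fun _ => p ^ e) ⊥

variable [IsNoetherianRing R]

theorem hilbertKunz_le_pow_spanFinrank (p e : ℕ) :
    hilbertKunz R p e ≤ ((p : ℕ∞) ^ e) ^ (maximalIdeal R).spanFinrank := by
  obtain ⟨s, hcard, hspan⟩ := Submodule.FG.exists_span_finset_card_eq_spanFinrank
    (IsNoetherian.noetherian (maximalIdeal R))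
  have hspan : Ideal.span (s : Set R) = maximalIdeal R := hspan
  simpa only [hspan, colength_maximalIdeal, mul_one, hcard] using
    hilbertKunz_le_of_subset p e (Ideal.span_le.1 hspan.le)

variable (R) in
theorem hilbertKunz_ne_top (p e : ℕ) : hilbertKunz R p e ≠ ⊤ :=
  let ⟨_, hk⟩ := exists_pow_le_bracketPow (maximalIdeal R) (p ^ e)
  colength_ne_top hk

theorem hilbertKunz_add_le (p : ℕ) [ExpChar R p] (e e' : ℕ) :
    hilbertKunz R p (e + e') ≤ hilbertKunz R p e' * hilbertKunz R p e := by
  obtain ⟨k, hk⟩ := exists_pow_le_bracketPow (maximalIdeal R) (p ^ e)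
  have hle := colength_map_le (iterateFrobenius R p e') hk
  rwa [map_iterateFrobenius_bracketPow, map_iterateFrobenius_eq_bracketPow] at hle

theorem hilbertKunz_mul_le_pow (p : ℕ) [ExpChar R p] (e n : ℕ) :
    hilbertKunz R p (e * n) ≤ hilbertKunz R p e ^ n := by
  induction n with
  | zero =>
    rw [mul_zero, pow_zero, hilbertKunz, ← map_iterateFrobenius_eq_bracketPow,
      iterateFrobenius_zero, Ideal.map_id, colength_maximalIdeal]
  | succ n ih =>
    rw [mul_add_one, pow_succ']
    exact (hilbertKunz_add_le p _ e).trans (mul_right_mono ih)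

theorem flat_frobenius_of_hilbertKunz_succ {p : ℕ} [Fact p.Prime] [CharP R p]
    (h : ∀ e, hilbertKunz R p (e + 1) = hilbertKunz R p 1 * hilbertKunz R p e) :
    (frobenius R p).Flat := by
  have hp : p.Prime := Fact.out
  rw [← iterateFrobenius_one]
  refine flat_of_colength_map_eq_mul
    ((bracketPow_le_pow _ _).trans (Ideal.pow_le_self (by simp [hp.ne_zero])))
    (hilbertKunz_ne_top R p 1) fun I k hk => ?_
  obtain ⟨l, hl⟩ := exists_pow_le_bracketPow (maximalIdeal R) (p ^ k)
  have hle : (maximalIdeal R).bracketPow (p ^ k) ≤ I :=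
    (bracketPow_le_pow _ _).trans ((Ideal.pow_le_pow_right (Nat.lt_pow_self hp.one_lt).le).trans hk)
  have hmap : colength (((maximalIdeal R).bracketPow (p ^ k)).map (iterateFrobenius R p 1)) =
      hilbertKunz R p (k + 1) := by
    rw [map_iterateFrobenius_bracketPow, hilbertKunz]
  exact colength_map_eq_of_le _ hle hl (hmap.trans (h k)) (hmap ▸ hilbertKunz_ne_top R p (k + 1))

section KrullDim

variable {p : ℕ} [Fact p.Prime] [CharP R p] {d : ℕ}

theorem pow_le_hilbertKunz (hd : d ≤ ringKrullDim R) (e : ℕ) :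
    ((p : ℕ∞) ^ e) ^ d ≤ hilbertKunz R p e := by
  have hp : p.Prime := Fact.out
  obtain ⟨P, hP⟩ : ∃ P : PrimeSpectrum R, d ≤ Order.coheight P := by
    obtain ⟨l, hl⟩ := Order.le_krullDim_iff.1 hd
    exact ⟨l.head, hl ▸ Order.length_le_coheight_head⟩
  obtain ⟨c, hc⟩ := exists_pow_le_colength_sup_maximalIdeal_pow P hP
  refine le_of_forall_pow_le_mul_pow (hilbertKunz_ne_top R p c) fun n => ?_
  have hexp : c * p ^ (e * n) ≤ p ^ (e * n + c) := by
    rw [pow_add, mul_comm]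
    exact Nat.mul_le_mul_left _ (Nat.lt_pow_self hp.one_lt).le
  calc (((p : ℕ∞) ^ e) ^ d) ^ n = ((p ^ (e * n) : ℕ) : ℕ∞) ^ d := by push_cast; ring
    _ ≤ colength (P.asIdeal ⊔ maximalIdeal R ^ (c * p ^ (e * n))) := hc _ (pow_pos hp.pos _)
    _ ≤ hilbertKunz R p (e * n + c) := colength_antitone <|
      (bracketPow_le_pow _ _).trans ((Ideal.pow_le_pow_right hexp).trans le_sup_right)
    _ ≤ hilbertKunz R p c * hilbertKunz R p (e * n) := hilbertKunz_add_le p _ _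
    _ ≤ hilbertKunz R p c * hilbertKunz R p e ^ n := mul_right_mono (hilbertKunz_mul_le_pow p e n)

theorem hilbertKunz_eq_of_hilbertKunz_one_eq (hd : d ≤ ringKrullDim R)
    (h : hilbertKunz R p 1 = (p : ℕ∞) ^ d) (e : ℕ) : hilbertKunz R p e = ((p : ℕ∞) ^ e) ^ d := by
  refine le_antisymm ?_ (pow_le_hilbertKunz hd e)
  rw [pow_right_comm, ← h]
  simpa using hilbertKunz_mul_le_pow p 1 e

theorem hilbertKunz_eq_of_isRegularLocal (hd : ringKrullDim R = d) (h : IsRegularLocal R) (e : ℕ) :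
    hilbertKunz R p e = ((p : ℕ∞) ^ e) ^ d := by
  have hone : 1 ≤ (p : ℕ∞) ^ e := by exact_mod_cast Nat.one_le_pow e p (Fact.out : p.Prime).pos
  have hle := (isRegularLocal_iff_spanFinrank_maximalIdeal_le hd).1 h
  exact le_antisymm ((hilbertKunz_le_pow_spanFinrank p e).trans (pow_le_pow_right₀ hone hle))
    (pow_le_hilbertKunz hd.ge e)

theorem pow_spanFinrank_le_hilbertKunz (h : (frobenius R p).Flat) (e : ℕ) :
    ((p : ℕ∞) ^ e) ^ (maximalIdeal R).spanFinrank ≤ hilbertKunz R p e := by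
  have hp : p.Prime := Fact.out
  obtain ⟨s, hcard, hspan, hs⟩ := exists_finset_lechIndependent_span_eq_maximalIdeal R
  have hrange : Set.range ((↑) : s → R) = s := Subtype.range_coe_subtype
  have hspan_pow : Ideal.span (Set.range fun i : s => (i : R) ^ p ^ e) =
      (maximalIdeal R).bracketPow (p ^ e) := by
    rw [← map_iterateFrobenius_eq_bracketPow, ← hspan, Ideal.map_span, ← hrange, ← Set.range_comp]
    rfl
  have hle := LechIndependent.prod_mul_colength_le (a := fun _ => p ^ e)
    (fun _ => pow_ne_zero e hp.ne_zero) (hs.map_of_flat (flat_iterateFrobenius h e))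
  rw [hspan_pow, hrange, hspan, colength_maximalIdeal] at hle
  simpa [hilbertKunz, hcard] using hle

theorem isRegularLocal_of_flat_frobenius (hd : ringKrullDim R = d) (h : (frobenius R p).Flat) :
    IsRegularLocal R := by
  obtain ⟨s, hcard, hs, hs_fin⟩ := exists_finset_card_eq_colength_span_ne_top hd
  have hpow : (p : ℕ∞) ^ (maximalIdeal R).spanFinrank ≤ (p : ℕ∞) ^ d :=
    le_of_forall_pow_le_mul_pow hs_fin fun e => by
      rw [pow_right_comm, pow_right_comm _ d, mul_comm, ← hcard]
      exact (pow_spanFinrank_le_hilbertKunz h e).trans (hilbertKunz_le_of_subset p e hs)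
  exact (isRegularLocal_iff_spanFinrank_maximalIdeal_le hd).2
    ((Nat.pow_le_pow_iff_right (Fact.out : p.Prime).one_lt).1 (by exact_mod_cast hpow))

end KrullDim

end HilbertKunz

end Kunz

/-- **Kunz's theorem.** For a Noetherian local ring `(R, 𝔪)` of Krull dimension `d`
containing a field of characteristic `p > 0`, the following are equivalent:
(1) `R` is regular; (2) the Frobenius map is flat; (3) `ℓ_R(R/𝔪^{[p]}) = p ^ d`;
(4) `ℓ_R(R/𝔪^{[p^e]}) = (p^e) ^ d` for every `e`. -/
theorem kunz_theorem (R : Type*) [CommRing R] [IsLocalRing R] [IsNoetherianRing R]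
    (p : ℕ) [Fact p.Prime] [CharP R p] (d : ℕ) (hd : ringKrullDim R = d) :
    List.TFAE
      [IsRegularLocal R,
       RingHom.Flat (frobeniusRingHom R p),
       moduleLength R (R ⧸ (IsLocalRing.maximalIdeal R).bracketPow p) = (p : ℕ∞) ^ d,
       ∀ e : ℕ,
         moduleLength R (R ⧸ (IsLocalRing.maximalIdeal R).bracketPow (p ^ e)) =
           ((p : ℕ∞) ^ e) ^ d] := by
  have hpow (e : ℕ) : moduleLength R (R ⧸ (maximalIdeal R).bracketPow (p ^ e)) =
      Kunz.hilbertKunz R p e := (Module.length_eq_height R _).symm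
  have hone : moduleLength R (R ⧸ (maximalIdeal R).bracketPow p) = Kunz.hilbertKunz R p 1 := by
    rw [← hpow 1, pow_one]
  simp only [hone, hpow]
  tfae_have 1 → 3 := fun h => by
    simpa using Kunz.hilbertKunz_eq_of_isRegularLocal (p := p) hd h 1
  tfae_have 3 → 4 := Kunz.hilbertKunz_eq_of_hilbertKunz_one_eq hd.ge
  tfae_have 4 → 2 := fun h => Kunz.flat_frobenius_of_hilbertKunz_succ fun e => by
    rw [h, h, h, ← mul_pow, ← pow_add, add_comm]
  tfae_have 2 → 1 := Kunz.isRegularLocal_of_flat_frobenius hd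
  tfae_finish
end

section
/- Let (R, 𝔪) be a regular local ring containing a field of prime characteristic p. Then every ideal of R is tightly closed, i.e., I^* = I for every ideal I ⊆ R. -/
open IsLocalRing Filter Topology
open scoped TensorProduct

/-!
Write `q = p ^ e`, and let `d` be the length of a regular sequence generating the maximal ideal `m`
of `R`. Replacing the members of a regular sequence by their `q`-th powers gives `ℓ(R/m^{[q]}) =
q ^ d`. Along a chain of ideals with simple quotients this yields `ℓ(R/I^{[q]}) ≤ q ^ d ℓ(R/I)` for
every `m`-primary ideal `I`, and equality holds because it does for the ideals `m^{[p^N]} ≤ I`.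
Comparing lengths along `0 → R/(I : x) → R/I → R/(I + (x)) → 0` and its analogue for `I^{[q]}` and
`x ^ q` gives `I^{[q]} : x ^ q = (I : x)^{[q]}`. So if `x ∉ I` and `c x ^ q ∈ I^{[q]}` for all large
`q`, then `c ∈ ⋂ m^{[q]} = 0`. An arbitrary ideal is the intersection of the `m`-primary ideals
`I + m ^ n` by Krull's theorem.
-/

section BracketPower

variable {R : Type*} [CommRing R]

lemma bracketPow_mono {I J : Ideal R} (h : I ≤ J) (q : ℕ) : I.bracketPow q ≤ J.bracketPow q :=
  Ideal.span_mono (Set.image_mono h)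

lemma bracketPow_le_pow (I : Ideal R) (q : ℕ) : I.bracketPow q ≤ I ^ q := by
  rw [Ideal.bracketPow, Ideal.span_le]
  rintro _ ⟨a, ha, rfl⟩
  exact Ideal.pow_mem_pow ha q

lemma bracketPow_colon_le (I : Ideal R) (x : R) (q : ℕ) :
    (I.colon {x}).bracketPow q ≤ (I.bracketPow q).colon {x ^ q} := by
  rw [Ideal.bracketPow, Ideal.span_le]
  rintro _ ⟨a, ha, rfl⟩
  rw [SetLike.mem_coe, Submodule.mem_colon_singleton] at ha ⊢
  exact Ideal.subset_span ⟨a • x, ha, by simp only [smul_eq_mul, mul_pow]⟩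

lemma exists_pow_le_bracketPow [IsNoetherianRing R] (I : Ideal R) (q : ℕ) :
    ∃ N, I ^ N ≤ I.bracketPow q := by
  obtain ⟨N, hN⟩ := (I.bracketPow q).exists_radical_pow_le_of_fg (IsNoetherian.noetherian _)
  refine ⟨N, (Ideal.pow_right_mono (fun a ha => ?_) N).trans hN⟩
  exact ⟨q, Ideal.subset_span ⟨a, ha, rfl⟩⟩

variable (p : ℕ) [Fact p.Prime]

lemma bracketPow_prime_pow_le_pow (I : Ideal R) (N : ℕ) : I.bracketPow (p ^ N) ≤ I ^ N :=
  (bracketPow_le_pow I _).trans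
    (Ideal.pow_le_pow_right (Nat.lt_pow_self (Fact.out : p.Prime).one_lt).le)

variable [CharP R p]

lemma bracketPow_eq_map_iterateFrobenius (I : Ideal R) (e : ℕ) :
    I.bracketPow (p ^ e) = I.map (iterateFrobenius R p e) :=
  rfl

lemma bracketPow_bracketPow (I : Ideal R) (e f : ℕ) :
    (I.bracketPow (p ^ e)).bracketPow (p ^ f) = I.bracketPow (p ^ (f + e)) := by
  simp only [bracketPow_eq_map_iterateFrobenius, Ideal.map_map, iterateFrobenius_add]

lemma bracketPow_top (e : ℕ) : (⊤ : Ideal R).bracketPow (p ^ e) = ⊤ := by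
  rw [bracketPow_eq_map_iterateFrobenius, Ideal.map_top]

lemma bracketPow_ofList (rs : List R) (e : ℕ) :
    (Ideal.ofList rs).bracketPow (p ^ e) = Ideal.ofList (rs.map (· ^ p ^ e)) := by
  rw [bracketPow_eq_map_iterateFrobenius, Ideal.map_ofList]
  rfl

lemma bracketPow_sup_span_singleton (I : Ideal R) (x : R) (e : ℕ) :
    (I ⊔ Ideal.span {x}).bracketPow (p ^ e) = I.bracketPow (p ^ e) ⊔ Ideal.span {x ^ p ^ e} := by
  simp only [bracketPow_eq_map_iterateFrobenius, Ideal.map_sup, Ideal.map_span,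
    Set.image_singleton, iterateFrobenius_def]

end BracketPower

section Colength

variable {R : Type*} [CommRing R]

/-- The colength `ℓ_R(R/I)` of an ideal `I`, with value `⊤` when `R/I` has infinite length. -/
noncomputable def colength (I : Ideal R) : ℕ∞ :=
  Module.length R (R ⧸ I)

lemma colength_top : colength (⊤ : Ideal R) = 0 := by
  have : Subsingleton (R ⧸ (⊤ : Ideal R)) := Ideal.Quotient.subsingleton_iff.2 rfl
  exact Module.length_eq_zero

lemma colength_eq_one (m : Ideal R) [hm : m.IsMaximal] : colength m = 1 :=
  Module.length_eq_one_iff.2 (isSimpleModule_iff_isCoatom.2 (Ideal.isMaximal_def.1 hm))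

lemma colength_anti {I J : Ideal R} (h : I ≤ J) : colength J ≤ colength I :=
  Module.length_le_of_surjective (Submodule.factor h) (Submodule.factor_surjective h)

lemma eq_of_le_of_colength_le {I J : Ideal R} (h : I ≤ J) (hI : colength I ≠ ⊤)
    (hle : colength I ≤ colength J) : I = J := by
  by_contra hne
  have hJ : colength J ≠ ⊤ := ne_top_of_le_ne_top hI (colength_anti h)
  simp only [colength, Module.length_quotient] at hJ hle
  exact hle.not_gt (Order.coheight_strictAnti (h.lt_of_ne hne) hJ.lt_top)

/-- Multiplication by `z` embeds `R/(A : z)` into `R/A` with cokernel `R/(A + (z))`. -/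
lemma colength_eq_colength_colon_add_colength_sup (A : Ideal R) (z : R) :
    colength A = colength (A.colon {z}) + colength (A ⊔ Ideal.span {z}) := by
  let f : (R ⧸ A.colon {z}) →ₗ[R] R ⧸ A :=
    Submodule.mapQ _ _ (LinearMap.mulRight R z) fun _ => Submodule.mem_colon_singleton.1
  let g : (R ⧸ A) →ₗ[R] R ⧸ A ⊔ Ideal.span {z} := Submodule.factor le_sup_left
  have hf : Function.Injective f := by
    rw [← LinearMap.ker_eq_bot]
    refine Submodule.ker_liftQ_eq_bot _ _ _ fun r hr => ?_
    rw [LinearMap.ker_comp, Submodule.ker_mkQ] at hr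
    exact Submodule.mem_colon_singleton.2 hr
  have hfg : Function.Exact f g := by
    have hrange : LinearMap.range f = Submodule.map A.mkQ (Ideal.span {z}) := by
      refine (Submodule.range_mapQ _ _ _ _).trans (congrArg _ ?_)
      ext r
      simp [Ideal.mem_span_singleton']
    rw [LinearMap.exact_iff, hrange, Submodule.ker_mapQ, Submodule.comap_id, Submodule.map_sup,
      Submodule.mkQ_map_self, bot_sup_eq]
  exact Module.length_eq_add_of_exact f g hf (Submodule.factor_surjective _) hfg

lemma colength_sup_span_pow {A : Ideal R} {z : R} (hz : IsSMulRegular (R ⧸ A) z) (n : ℕ) :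
    colength (A ⊔ Ideal.span {z ^ n}) = n * colength (A ⊔ Ideal.span {z}) := by
  induction n with
  | zero => simp [colength_top]
  | succ n ih =>
    have hsup : A ⊔ Ideal.span {z ^ (n + 1)} ⊔ Ideal.span {z} = A ⊔ Ideal.span {z} := by
      rw [sup_assoc, sup_eq_right.2 (Ideal.span_singleton_le_span_singleton.2
        (dvd_pow_self z n.succ_ne_zero))]
    have hcolon : (A ⊔ Ideal.span {z ^ (n + 1)}).colon {z} = A ⊔ Ideal.span {z ^ n} := by
      ext r
      rw [Submodule.mem_colon_singleton, smul_eq_mul, sup_comm A, sup_comm A,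
        Ideal.mem_span_singleton_sup, Ideal.mem_span_singleton_sup]
      refine exists_congr fun a => ⟨?_, ?_⟩
      · rintro ⟨b, hb, h⟩
        refine ⟨r - a * z ^ n, mem_of_isSMulRegular_quotient_of_smul_mem hz ?_, by ring⟩
        have : z • (r - a * z ^ n) = b := by rw [smul_eq_mul]; linear_combination -h
        rwa [this]
      · rintro ⟨b, hb, rfl⟩
        exact ⟨b * z, A.mul_mem_right z hb, by ring⟩
    rw [colength_eq_colength_colon_add_colength_sup _ z, hsup, hcolon, ih]
    push_cast
    ring

end Colength

section RegularSequence

open RingTheory.Sequence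

variable {R : Type*} [CommRing R]

lemma isWeaklyRegular_concat_iff (rs : List R) (t : R) :
    IsWeaklyRegular R (rs ++ [t]) ↔
      IsWeaklyRegular R rs ∧ IsSMulRegular (R ⧸ Ideal.ofList rs) t := by
  rw [isWeaklyRegular_append_iff, isWeaklyRegular_singleton_iff, smul_eq_mul, Ideal.mul_top]

lemma ofList_eq_of_perm {rs ts : List R} (h : rs.Perm ts) : Ideal.ofList rs = Ideal.ofList ts :=
  congrArg Ideal.span (Set.ext fun _ => h.mem_iff)

variable [IsLocalRing R] [IsNoetherianRing R]

/-- Regular sequences in the maximal ideal may be permuted, so the element to be replaced by its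
power can be taken to be the last one. -/
lemma isWeaklyRegular_cons_pow {t : R} {rs : List R} (h : IsWeaklyRegular R (t :: rs))
    (hmem : ∀ r ∈ t :: rs, r ∈ maximalIdeal R) {n : ℕ} (hn : n ≠ 0) :
    IsWeaklyRegular R (t ^ n :: rs) ∧
      colength (Ideal.ofList (t ^ n :: rs)) = n * colength (Ideal.ofList (t :: rs)) := by
  have hlast := isWeaklyRegular_of_perm_of_subset_maximalIdeal h
    (List.perm_append_singleton t rs).symm hmem
  obtain ⟨hrs, ht⟩ := (isWeaklyRegular_concat_iff rs t).1 hlast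
  have hmem_pow : ∀ r ∈ t ^ n :: rs, r ∈ maximalIdeal R := by
    rw [List.forall_mem_cons] at hmem ⊢
    exact ⟨Ideal.pow_mem_of_mem _ hmem.1 n hn.pos, hmem.2⟩
  have hperm := List.perm_append_singleton (t ^ n) rs
  refine ⟨isWeaklyRegular_of_perm_of_subset_maximalIdeal
    ((isWeaklyRegular_concat_iff rs (t ^ n)).2 ⟨hrs, ht.pow n⟩) hperm
    fun r hr => hmem_pow r (hperm.mem_iff.1 hr), ?_⟩
  simp only [Ideal.ofList_cons, sup_comm _ (Ideal.ofList rs)]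
  exact colength_sup_span_pow ht n

lemma colength_ofList_append_map_pow {n : ℕ} (hn : n ≠ 0) (rs ts : List R)
    (h : IsWeaklyRegular R (rs ++ ts)) (hmem : ∀ r ∈ rs ++ ts, r ∈ maximalIdeal R) :
    colength (Ideal.ofList (rs ++ ts.map (· ^ n))) =
      n ^ ts.length * colength (Ideal.ofList (rs ++ ts)) := by
  induction ts generalizing rs with
  | nil => simp
  | cons t ts ih =>
    have hmem' := fun r => hmem r ∘ List.perm_middle.mem_iff.2
    obtain ⟨hpow, hcolength⟩ := isWeaklyRegular_cons_pow
      (isWeaklyRegular_of_perm_of_subset_maximalIdeal h List.perm_middle hmem) hmem' hn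
    rw [List.map_cons, ofList_eq_of_perm List.perm_middle, ← List.cons_append,
      ih (t ^ n :: rs) hpow ?_, List.cons_append, hcolength, ofList_eq_of_perm List.perm_middle,
      List.length_cons, pow_succ, mul_assoc]
    rw [List.forall_mem_cons] at hmem'
    rw [List.cons_append, List.forall_mem_cons]
    exact ⟨Ideal.pow_mem_of_mem _ hmem'.1 n hn.pos, hmem'.2⟩

lemma colength_bracketPow_maximalIdeal (p : ℕ) [Fact p.Prime] [CharP R p] {rs : List R}
    (hm : maximalIdeal R = Ideal.ofList rs) (hrs : IsWeaklyRegular R rs) (e : ℕ) :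
    colength ((maximalIdeal R).bracketPow (p ^ e)) =
      ((p ^ e) ^ rs.length : ℕ) := by
  have hmem : ∀ r ∈ rs, r ∈ maximalIdeal R := fun r hr => hm ▸ Ideal.subset_span hr
  have hq : p ^ e ≠ 0 := pow_ne_zero e (Fact.out : p.Prime).ne_zero
  rw [hm, bracketPow_ofList]
  refine (colength_ofList_append_map_pow hq [] rs hrs hmem).trans ?_
  rw [List.nil_append, ← hm, colength_eq_one, mul_one]
  push_cast
  rfl

end RegularSequence

section FrobeniusLength

variable {R : Type*} [CommRing R]

lemma exists_mem_notMem_colon_eq {m I J : Ideal R} [hm : m.IsMaximal] {N : ℕ} (hN : m ^ N ≤ I)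
    (hJ : ¬ J ≤ I) : ∃ y ∈ J, y ∉ I ∧ I.colon {y} = m := by
  classical
  have hex : ∃ n, m ^ n * J ≤ I := ⟨N, Ideal.mul_le_left.trans hN⟩
  obtain ⟨n, hn⟩ : ∃ n, Nat.find hex = n + 1 := Nat.exists_eq_succ_of_ne_zero fun h => hJ <| by
    simpa [h] using Nat.find_spec hex
  have hle : m * (m ^ n * J) ≤ I := by
    rw [← mul_assoc, ← pow_succ', ← hn]
    exact Nat.find_spec hex
  obtain ⟨y, hy, hyI⟩ := SetLike.not_le_iff_exists.1 (Nat.find_min hex (m := n) (by lia))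
  refine ⟨y, Ideal.mul_le_right hy, hyI, (hm.eq_of_le ?_ fun k hk => ?_).symm⟩
  · rwa [Ne, Submodule.colon_eq_top_iff_subset, Set.singleton_subset_iff]
  · exact Submodule.mem_colon_singleton.2 (hle (Ideal.mul_mem_mul hk hy))

variable (p : ℕ) [Fact p.Prime] [CharP R p]

lemma colength_bracketPow_add_le [IsNoetherianRing R] {m I J : Ideal R} [m.IsMaximal] {N : ℕ}
    (hN : m ^ N ≤ I) (hIJ : I ≤ J) (e : ℕ) :
    colength (I.bracketPow (p ^ e)) + colength (m.bracketPow (p ^ e)) * colength J ≤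
      colength (J.bracketPow (p ^ e)) + colength (m.bracketPow (p ^ e)) * colength I := by
  induction I using WellFoundedGT.induction with
  | ind I ih =>
    by_cases hJI : J ≤ I
    · rw [le_antisymm hIJ hJI]
    obtain ⟨y, hyJ, hyI, hcolon⟩ := exists_mem_notMem_colon_eq hN hJI
    set I' := I ⊔ Ideal.span {y}
    set L := colength (m.bracketPow (p ^ e))
    have hlt : I < I' := left_lt_sup.2 fun h => hyI (h (Ideal.mem_span_singleton_self y))
    have hI'J : I' ≤ J := sup_le hIJ ((Ideal.span_singleton_le_iff_mem _).2 hyJ)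
    have hlength : colength I = 1 + colength I' := by
      rw [colength_eq_colength_colon_add_colength_sup I y, hcolon, colength_eq_one]
    have hlength_pow : colength (I.bracketPow (p ^ e)) ≤ L + colength (I'.bracketPow (p ^ e)) := by
      rw [colength_eq_colength_colon_add_colength_sup _ (y ^ p ^ e),
        ← bracketPow_sup_span_singleton]
      gcongr
      exact colength_anti (hcolon ▸ bracketPow_colon_le I y (p ^ e))
    calc colength (I.bracketPow (p ^ e)) + L * colength J
        ≤ L + (colength (I'.bracketPow (p ^ e)) + L * colength J) := by
          rw [← add_assoc]; gcongr
      _ ≤ L + (colength (J.bracketPow (p ^ e)) + L * colength I') := by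
          grw [ih I' hlt (hN.trans hlt.le) hI'J]
      _ = colength (J.bracketPow (p ^ e)) + L * colength I := by rw [hlength]; ring

variable [IsLocalRing R] [IsNoetherianRing R] {rs : List R} {I : Ideal R} {N : ℕ}

lemma colength_bracketPow (hm : maximalIdeal R = Ideal.ofList rs)
    (hrs : RingTheory.Sequence.IsWeaklyRegular R rs) (hN : maximalIdeal R ^ N ≤ I) (e : ℕ) :
    colength (I.bracketPow (p ^ e)) = ((p ^ e) ^ rs.length : ℕ) * colength I := by
  have hlen := colength_bracketPow_maximalIdeal p hm hrs
  apply le_antisymm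
  · have h := colength_bracketPow_add_le p hN le_top e
    rwa [bracketPow_top, colength_top, mul_zero, add_zero, zero_add, hlen] at h
  · obtain ⟨M, hM⟩ := exists_pow_le_bracketPow (maximalIdeal R) (p ^ N)
    have h := colength_bracketPow_add_le p hM ((bracketPow_prime_pow_le_pow p _ N).trans hN) e
    have hpow : (p ^ (e + N)) ^ rs.length = (p ^ e) ^ rs.length * (p ^ N) ^ rs.length := by
      rw [pow_add, mul_pow]
    rw [bracketPow_bracketPow, hlen, hlen, hlen, hpow, ← Nat.cast_mul, add_comm (colength _)] at h
    exact (ENat.add_le_add_iff_left (ENat.natCast_ne_top _)).1 h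

lemma colon_bracketPow (hm : maximalIdeal R = Ideal.ofList rs)
    (hrs : RingTheory.Sequence.IsWeaklyRegular R rs) (hN : maximalIdeal R ^ N ≤ I) (x : R)
    (e : ℕ) :
    (I.bracketPow (p ^ e)).colon {x ^ p ^ e} = (I.colon {x}).bracketPow (p ^ e) := by
  set K := I ⊔ Ideal.span {x}
  have hIcolon : I ≤ I.colon {x} := fun a ha =>
    Submodule.mem_colon_singleton.2 (I.mul_mem_right x ha)
  have hfin : ∀ J, I ≤ J → colength (J.bracketPow (p ^ e)) ≠ ⊤ := fun J hJ => by
    have hle := bracketPow_mono ((bracketPow_prime_pow_le_pow p _ N).trans (hN.trans hJ)) (p ^ e)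
    rw [bracketPow_bracketPow] at hle
    refine ne_top_of_le_ne_top ?_ (colength_anti hle)
    rw [colength_bracketPow_maximalIdeal p hm hrs]
    exact ENat.natCast_ne_top _
  have hlength : colength ((I.colon {x}).bracketPow (p ^ e)) + colength (K.bracketPow (p ^ e)) =
      colength ((I.bracketPow (p ^ e)).colon {x ^ p ^ e}) + colength (K.bracketPow (p ^ e)) :=
    calc
      _ = ((p ^ e) ^ rs.length : ℕ) * (colength (I.colon {x}) + colength K) := by
        rw [colength_bracketPow p hm hrs (hN.trans hIcolon),
          colength_bracketPow p hm hrs (hN.trans le_sup_left), mul_add]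
      _ = colength (I.bracketPow (p ^ e)) := by
        rw [← colength_eq_colength_colon_add_colength_sup, colength_bracketPow p hm hrs hN]
      _ = _ := by
        rw [bracketPow_sup_span_singleton, ← colength_eq_colength_colon_add_colength_sup]
  exact (eq_of_le_of_colength_le (bracketPow_colon_le I x _) (hfin _ hIcolon)
    (ENat.add_left_injective_of_ne_top (hfin K le_sup_left) hlength).le).symm

end FrobeniusLength

section TightClosure

variable {R : Type*} [CommRing R]

lemma one_mem_ringCirc : (1 : R) ∈ ringCirc R :=
  fun _ hP => (Ideal.ne_top_iff_one _).1 hP.1.1.ne_top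

lemma zero_notMem_ringCirc [Nontrivial R] : (0 : R) ∉ ringCirc R := fun h =>
  let ⟨_, hP⟩ := Ideal.nonempty_minimalPrimes (bot_ne_top (α := Ideal R))
  h _ hP (zero_mem _)

lemma subset_tightClosure (p : ℕ) (I : Ideal R) : (I : Set R) ⊆ tightClosure p I := fun x hx =>
  ⟨1, one_mem_ringCirc, 0, fun _ _ => by
    rw [one_mul]
    exact Ideal.subset_span ⟨x, hx, rfl⟩⟩

lemma tightClosure_mono (p : ℕ) {I J : Ideal R} (h : I ≤ J) :
    tightClosure p I ⊆ tightClosure p J :=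
  fun _ ⟨c, hc, N, hx⟩ => ⟨c, hc, N, fun e he => bracketPow_mono h _ (hx e he)⟩

variable [IsLocalRing R] [IsNoetherianRing R]

lemma iInf_sup_maximalIdeal_pow (I : Ideal R) : ⨅ n, I ⊔ maximalIdeal R ^ n = I := by
  have h := congrArg (Submodule.comap I.mkQ) <|
    Ideal.iInf_pow_smul_eq_bot_of_isLocalRing (M := R ⧸ I) _ (maximalIdeal.isMaximal R).ne_top
  have hcomap : ∀ n, Submodule.comap I.mkQ (maximalIdeal R ^ n • ⊤) = I ⊔ maximalIdeal R ^ n := by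
    intro n
    rw [← Submodule.range_mkQ, LinearMap.range_eq_map, ← Submodule.map_smul'',
      Submodule.comap_map_mkQ, smul_eq_mul, Ideal.mul_top]
  rwa [Submodule.comap_iInf, Submodule.comap_bot, Submodule.ker_mkQ, funext hcomap] at h

lemma tightClosure_eq_of_maximalIdeal_pow_le (p : ℕ) [Fact p.Prime] [CharP R p] {rs : List R}
    (hm : maximalIdeal R = Ideal.ofList rs) (hrs : RingTheory.Sequence.IsWeaklyRegular R rs)
    {I : Ideal R} {N : ℕ} (hN : maximalIdeal R ^ N ≤ I) : tightClosure p I = (I : Set R) := by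
  refine (subset_tightClosure p I).antisymm' fun x hx => ?_
  by_contra hxI
  obtain ⟨c, hc, E, hcx⟩ := hx
  have hcolon : I.colon {x} ≤ maximalIdeal R := le_maximalIdeal <| by
    rwa [Ne, Submodule.colon_eq_top_iff_subset, Set.singleton_subset_iff]
  have hc_mem : ∀ e, E ≤ e → c ∈ maximalIdeal R ^ e := by
    intro e he
    have hcq : c ∈ (I.colon {x}).bracketPow (p ^ e) := by
      rw [← colon_bracketPow p hm hrs hN]
      exact Submodule.mem_colon_singleton.2 (hcx e he)
    exact bracketPow_prime_pow_le_pow p _ e (bracketPow_mono hcolon _ hcq)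
  have hc_zero : c ∈ ⨅ n, maximalIdeal R ^ n := Submodule.mem_iInf _ |>.2 fun n =>
    Ideal.pow_le_pow_right (le_max_right E n) (hc_mem _ (le_max_left E n))
  rw [Ideal.iInf_pow_eq_bot_of_isLocalRing _ (maximalIdeal.isMaximal R).ne_top] at hc_zero
  exact zero_notMem_ringCirc ((Submodule.mem_bot R).1 hc_zero ▸ hc)

lemma tightClosure_eq_of_isWeaklyRegular (p : ℕ) [Fact p.Prime] [CharP R p] {rs : List R}
    (hm : maximalIdeal R = Ideal.ofList rs) (hrs : RingTheory.Sequence.IsWeaklyRegular R rs)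
    (I : Ideal R) : tightClosure p I = (I : Set R) := by
  refine (subset_tightClosure p I).antisymm' fun x hx => ?_
  rw [← iInf_sup_maximalIdeal_pow I, SetLike.mem_coe, Submodule.mem_iInf]
  intro n
  rw [← SetLike.mem_coe,
    ← tightClosure_eq_of_maximalIdeal_pow_le p hm hrs (le_sup_right : _ ≤ I ⊔ maximalIdeal R ^ n)]
  exact tightClosure_mono p le_sup_left hx

end TightClosure

section RegularLocalRing

open scoped Pointwise

universe u

variable {R : Type*} [CommRing R]

lemma IsRegularLocal.isRegularLocalRing [IsLocalRing R] (h : IsRegularLocal R) :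
    IsRegularLocalRing R := by
  obtain ⟨_, d, x, hd, hx⟩ := h
  refine IsRegularLocalRing.of_spanFinrank_maximalIdeal_le R ?_
  have hle := Submodule.spanFinrank_span_le_ncard_of_finite (R := R) (Set.finite_range x)
  have hcard : (Set.range x).ncard ≤ d := by
    rw [← Set.image_univ]
    exact (Set.ncard_image_le Set.finite_univ).trans_eq (by simp)
  rw [hd, hx]
  exact_mod_cast hle.trans hcard

/-- `z` is nonzero in the cotangent space `m/m²`, hence part of a basis of it. -/
lemma exists_span_insert_eq_maximalIdeal [IsLocalRing R] [IsNoetherianRing R] {z : R}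
    (hz : z ∈ maximalIdeal R) (hz2 : z ∉ maximalIdeal R ^ 2) :
    ∃ s : Set R, s.Finite ∧ s.ncard + 1 = (maximalIdeal R).spanFinrank ∧
      Ideal.span (insert z s) = maximalIdeal R := by
  let z' : maximalIdeal R := ⟨z, hz⟩
  have hz' : (maximalIdeal R).toCotangent z' ≠ 0 := fun h =>
    hz2 ((Ideal.toCotangent_eq_zero _ _).1 h)
  obtain ⟨b, -, hzb, hspan, hli⟩ := exists_linearIndepOn_extension
    (LinearIndepOn.singleton (R := ResidueField R) hz') (Set.subset_univ _)
  rw [Set.image_univ, (maximalIdeal R).toCotangent_surjective.range_eq, Set.univ_subset_iff,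
    Submodule.coe_eq_univ] at hspan
  have hb : b.Finite := hli.linearIndependent.finite
  have hcard : b.ncard = (maximalIdeal R).spanFinrank := by
    have hrange : ⊤ ≤ Submodule.span (ResidueField R)
        (Set.range fun i : b => (maximalIdeal R).toCotangent i) := by
      rw [← Set.image_eq_range, hspan]
    rw [spanFinrank_maximalIdeal_eq_finrank_cotangentSpace,
      Module.finrank_eq_nat_card_basis (Module.Basis.mk hli hrange), Nat.card_coe_set_eq]
  have hspan_b : Ideal.span (Subtype.val '' b) = maximalIdeal R := by
    have := congrArg (Submodule.map (maximalIdeal R).subtype)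
      (CotangentSpace.span_image_eq_top_iff.1 hspan)
    rwa [Submodule.map_span, Submodule.map_top, Submodule.range_subtype] at this
  refine ⟨Subtype.val '' (b \ {z'}), hb.sdiff.image _, ?_, ?_⟩
  · rw [Set.ncard_image_of_injective _ Subtype.val_injective,
      Set.ncard_sdiff_singleton_add_one (hzb rfl) hb, hcard]
  · have hinsert : insert z' (b \ {z'}) = b := Set.insert_sdiff_self_of_mem (hzb rfl)
    refine (congrArg Ideal.span ?_).trans hspan_b
    rw [← congrArg (Subtype.val '' ·) hinsert, Set.image_insert_eq]

lemma spanFinrank_maximalIdeal_quotient_lt [IsLocalRing R] [IsNoetherianRing R] {z : R}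
    [IsLocalRing (R ⧸ Ideal.span {z})] (hz : z ∈ maximalIdeal R) (hz2 : z ∉ maximalIdeal R ^ 2) :
    (maximalIdeal (R ⧸ Ideal.span {z})).spanFinrank < (maximalIdeal R).spanFinrank := by
  obtain ⟨s, hs, hcard, hspan⟩ := exists_span_insert_eq_maximalIdeal hz hz2
  have hmap : maximalIdeal (R ⧸ Ideal.span {z}) =
      Ideal.span (Ideal.Quotient.mk (Ideal.span {z}) '' s) := by
    rw [← map_maximalIdeal_of_surjective _ Ideal.Quotient.mk_surjective, ← hspan, Ideal.map_span,
      Set.image_insert_eq, Ideal.Quotient.eq_zero_iff_mem.2 (Ideal.mem_span_singleton_self z),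
      Ideal.span_insert_zero]
  rw [hmap, ← hcard, Nat.lt_succ_iff]
  exact (Submodule.spanFinrank_span_le_ncard_of_finite (hs.image _)).trans (Set.ncard_image_le hs)

lemma smul_top_eq_span_singleton (z : R) : z • (⊤ : Ideal R) = Ideal.span {z} := by
  rw [← Submodule.ideal_span_singleton_smul, smul_eq_mul, Ideal.mul_top]

lemma isRegularLocalRing_quotient_span_singleton [IsRegularLocalRing R] {z : R}
    (hz : z ∈ maximalIdeal R) (hz2 : z ∉ maximalIdeal R ^ 2) :
    IsRegularLocalRing (R ⧸ Ideal.span {z}) := by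
  have : Nontrivial (R ⧸ Ideal.span {z}) := Ideal.Quotient.nontrivial_iff.2 fun h =>
    (maximalIdeal.isMaximal R).ne_top (top_le_iff.1 (h ▸ (Ideal.span_singleton_le_iff_mem _).2 hz))
  have := IsLocalRing.of_surjective' (Ideal.Quotient.mk (Ideal.span {z}))
    Ideal.Quotient.mk_surjective
  refine IsRegularLocalRing.of_spanFinrank_maximalIdeal_le _ ?_
  have hrank := spanFinrank_maximalIdeal_quotient_lt hz hz2
  have hdim := ringKrullDim_le_ringKrullDim_quotSMulTop_succ hz
  rw [← IsRegularLocalRing.spanFinrank_maximalIdeal, smul_top_eq_span_singleton] at hdim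
  refine ENat.WithBot.add_le_add_one_right_iff.1 (le_trans ?_ hdim)
  exact_mod_cast hrank

lemma exists_mem_maximalIdeal_notMem_sq_mem_ringCirc [IsLocalRing R] [IsNoetherianRing R]
    (hm : maximalIdeal R ∉ minimalPrimes R) :
    ∃ z ∈ maximalIdeal R, z ∉ maximalIdeal R ^ 2 ∧ z ∈ ringCirc R := by
  simp only [ringCirc, Set.mem_ofPred_eq]
  by_contra! hcon
  have hfin : (insert (maximalIdeal R ^ 2) (minimalPrimes R)).Finite :=
    (minimalPrimes.finite_of_isNoetherianRing R).insert _
  have hcover : (maximalIdeal R : Set R) ⊆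
      ⋃ J ∈ insert (maximalIdeal R ^ 2) (minimalPrimes R), (J : Set R) := fun z hz => by
    by_cases hz2 : z ∈ maximalIdeal R ^ 2
    · exact Set.mem_biUnion (Set.mem_insert _ _) hz2
    · obtain ⟨P, hP, hzP⟩ := hcon z hz hz2
      exact Set.mem_biUnion (Set.mem_insert_of_mem _ hP) hzP
  obtain ⟨J, rfl | hJ, hle⟩ := (Ideal.subset_union_prime_finite hfin (f := id)
    (maximalIdeal R ^ 2) (maximalIdeal R ^ 2) fun J hJ hne _ =>
      (hJ.resolve_left hne).1.1).1 hcover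
  · have hbot : maximalIdeal R = ⊥ :=
      Submodule.eq_bot_of_le_smul_of_le_jacobson_bot (maximalIdeal R) _
        (IsNoetherian.noetherian _) (by simpa [pow_two] using hle) (maximalIdeal_le_jacobson _)
    exact hm ⟨⟨inferInstance, bot_le⟩, fun _ _ _ => hbot ▸ bot_le⟩
  · exact hm ((maximalIdeal.isMaximal R).eq_of_le hJ.1.1.ne_top hle ▸ hJ)

/-- A minimal prime `P ≤ (z)` satisfies `P = z P`, so it vanishes by Nakayama's lemma. -/
lemma isDomain_of_isPrime_span_singleton [IsLocalRing R] [IsNoetherianRing R] {z : R}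
    (hz : z ∈ maximalIdeal R) [hprime : (Ideal.span {z}).IsPrime]
    (hz_circ : z ∈ ringCirc R) : IsDomain R := by
  obtain ⟨P, hP, hPz⟩ := Ideal.exists_minimalPrimes_le (J := Ideal.span {z}) bot_le
  have hPprime : P.IsPrime := hP.1.1
  have hle : P ≤ maximalIdeal R • P := fun x hx => by
    obtain ⟨a, rfl⟩ := Ideal.mem_span_singleton'.1 (hPz hx)
    have ha : a ∈ P := (hPprime.mem_or_mem hx).resolve_right (hz_circ P hP)
    rw [mul_comm]
    exact Ideal.mul_mem_mul hz ha
  have hbot : P = ⊥ := Submodule.eq_bot_of_le_smul_of_le_jacobson_bot _ _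
    (IsNoetherian.noetherian _) hle (maximalIdeal_le_jacobson _)
  have : (⊥ : Ideal R).IsPrime := hbot ▸ hPprime
  exact IsDomain.of_bot_isPrime R

lemma maximalIdeal_notMem_minimalPrimes [IsRegularLocalRing R] (h : maximalIdeal R ≠ ⊥) :
    maximalIdeal R ∉ minimalPrimes R := fun hmin => by
  have hheight : (maximalIdeal R).height = 0 := Ideal.height_eq_zero_iff.2 hmin
  have hdim := IsRegularLocalRing.spanFinrank_maximalIdeal (R := R)
  rw [← maximalIdeal_height_eq_ringKrullDim, hheight] at hdim
  refine h ((Submodule.spanFinrank_eq_zero_iff_eq_bot (IsNoetherian.noetherian _)).1 ?_)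
  exact_mod_cast hdim

lemma regularLocalRing_induction
    {motive : ∀ (R : Type u) [CommRing R] [IsRegularLocalRing R], Prop}
    (field : ∀ (R : Type u) [CommRing R] [IsRegularLocalRing R], maximalIdeal R = ⊥ → motive R)
    (quotient : ∀ (R : Type u) [CommRing R] [IsRegularLocalRing R] (z : R)
      [IsRegularLocalRing (R ⧸ Ideal.span {z})], z ∈ maximalIdeal R → z ∈ ringCirc R →
      motive (R ⧸ Ideal.span {z}) → motive R)
    (R : Type u) [CommRing R] [IsRegularLocalRing R] : motive R := by
  induction hn : (maximalIdeal R).spanFinrank using Nat.strong_induction_on generalizing R with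
  | h n ih =>
    by_cases hbot : maximalIdeal R = ⊥
    · exact field R hbot
    obtain ⟨z, hz, hz2, hz_circ⟩ := exists_mem_maximalIdeal_notMem_sq_mem_ringCirc
      (maximalIdeal_notMem_minimalPrimes hbot)
    have := isRegularLocalRing_quotient_span_singleton hz hz2
    exact quotient R z hz hz_circ
      (ih _ (hn ▸ spanFinrank_maximalIdeal_quotient_lt hz hz2) (R ⧸ Ideal.span {z}) rfl)

lemma isDomain_of_isRegularLocalRing (R : Type*) [CommRing R] [IsRegularLocalRing R] :
    IsDomain R := by
  refine regularLocalRing_induction (motive := fun R _ _ => IsDomain R) ?field ?quotient R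
  case field => exact fun R _ _ h => (isField_iff_maximalIdeal_eq.2 h).isDomain
  case quotient =>
    intro R _ _ z _ hz hz_circ ih
    have := (Ideal.Quotient.isDomain_iff_prime _).1 ih
    exact isDomain_of_isPrime_span_singleton hz hz_circ

lemma exists_isWeaklyRegular_maximalIdeal_eq_ofList (R : Type*) [CommRing R]
    [IsRegularLocalRing R] :
    ∃ rs : List R, maximalIdeal R = Ideal.ofList rs ∧
      RingTheory.Sequence.IsWeaklyRegular R rs := by
  refine regularLocalRing_induction (motive := fun R _ _ => ∃ rs : List R,
    maximalIdeal R = Ideal.ofList rs ∧ RingTheory.Sequence.IsWeaklyRegular R rs) ?field ?quotient R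
  case field => exact fun R _ _ h => ⟨[], h.trans Ideal.ofList_nil.symm, .nil R R⟩
  case quotient =>
    rintro R _ _ z _ hz hz_circ ⟨ss, hm, hss⟩
    obtain ⟨rs, rfl⟩ := List.map_surjective_iff.2 Ideal.Quotient.mk_surjective ss
    have := isDomain_of_isRegularLocalRing R
    refine ⟨z :: rs, ?_, (RingTheory.Sequence.isWeaklyRegular_cons_iff R z rs).2 ⟨?_, ?_⟩⟩
    · rw [← Ideal.map_ofList, ← map_maximalIdeal_of_surjective _ Ideal.Quotient.mk_surjective] at hm
      have hcomap := congrArg (Ideal.comap (Ideal.Quotient.mk (Ideal.span {z}))) hm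
      rw [Ideal.comap_map_mk ((Ideal.span_singleton_le_iff_mem _).2 hz),
        Ideal.comap_map_quotientMk] at hcomap
      rw [hcomap, Ideal.ofList_cons]
    · have hz0 : z ≠ 0 := fun h => zero_notMem_ringCirc (h ▸ hz_circ)
      exact fun a b hab => mul_left_cancel₀ hz0 hab
    · have equiv := Submodule.quotEquivOfEq _ _ (smul_top_eq_span_singleton z).symm
      exact (equiv.isWeaklyRegular_congr rs).1
        ((RingTheory.Sequence.isWeaklyRegular_map_algebraMap_iff _ _ rs).1 hss)

end RegularLocalRing

/-- In a regular local ring of prime characteristic `p`, every ideal is tightly closed. -/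
theorem regular_local_ideal_tightly_closed (R : Type*) [CommRing R] [IsLocalRing R]
    (p : ℕ) [Fact p.Prime] [CharP R p] (hreg : IsRegularLocal R) (I : Ideal R) :
    tightClosure p I = (I : Set R) := by
  have := hreg.isRegularLocalRing
  obtain ⟨rs, hm, hrs⟩ := exists_isWeaklyRegular_maximalIdeal_eq_ofList R
  exact tightClosure_eq_of_isWeaklyRegular p hm hrs I
end

section
/- Let R be an F-finite reduced Noetherian commutative ring of prime characteristic p and let c ∈ R° be an element such that the localization R_c is strongly F-regular. If there exists e ∈ ℕ such that the map cF^e : R → F^e_*R, x ↦ c·x^{p^e}, splits as an R-module homomorphism, then R is strongly F-regular. -/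
open IsLocalRing Filter Topology
open scoped TensorProduct

/-!
Given `d ∈ R°`, strong F-regularity of a localization `A` provides a `p^{-e}`-linear map
`φ : A → A` with `φ d = 1`. Because `F^e_* R` is finitely generated, the values of `φ` on `R`
have a common denominator `s`, so `s φ` restricts to a `p^{-e}`-linear map `ψ : R → R` with
`ψ d = s`. Composing `ψ` with a splitting of `sF^f` gives a splitting of `dF^{e+f}`.
For `A = R_c` one has `s = c^n`, and a splitting of `cF^f` yields one of `c^n F^{nf}`, because
`c^n` divides the element `c^{1 + p^f + ⋯ + p^{(n-1)f}}` split by the iterated composite.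
-/

/-- An additive map `φ : M → N` is `q`-inverse linear if `φ (r ^ q • x) = r • φ x`. For
`q = p ^ e` in characteristic `p` these are the `p^{-e}`-linear maps, that is, the `R`-linear
maps `F^e_* M → N`; a splitting of `cF^e` is such a map `R → R` sending `c` to `1`. -/
def IsInvPowLinear (R : Type*) {M N : Type*} [CommRing R] [AddCommGroup M] [Module R M]
    [AddCommGroup N] [Module R N] (q : ℕ) (φ : M →+ N) : Prop :=
  ∀ (r : R) (x : M), φ (r ^ q • x) = r • φ x

namespace IsInvPowLinear

variable {R L M N : Type*} [CommRing R] [AddCommGroup L] [Module R L] [AddCommGroup M]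
  [Module R M] [AddCommGroup N] [Module R N] {q q' : ℕ}

theorem comp {ψ : M →+ N} {φ : L →+ M} (hψ : IsInvPowLinear R q ψ)
    (hφ : IsInvPowLinear R q' φ) : IsInvPowLinear R (q * q') (ψ.comp φ) := by
  intro r x
  simp only [AddMonoidHom.comp_apply, pow_mul, hφ (r ^ q), hψ r]

theorem comp_algebraMap {A : Type*} [CommRing A] [Algebra R A] [Module A N]
    [IsScalarTower R A N] {φ : A →+ N} (hφ : IsInvPowLinear A q φ) :
    IsInvPowLinear R q (φ.comp (algebraMap R A : R →+ A)) := by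
  intro r x
  simpa using hφ (algebraMap R A r) (algebraMap R A x)

theorem exists_fg_forall_mem {φ : R →+ N} (hφ : IsInvPowLinear R q φ) (hR : FFinite R q) :
    ∃ P : Submodule R N, P.FG ∧ ∀ x, φ x ∈ P := by
  obtain ⟨s, hs⟩ := hR
  refine ⟨Submodule.span R (φ '' s), Submodule.fg_span (s.finite_toSet.image φ), fun x ↦ ?_⟩
  obtain ⟨a, ha⟩ := hs x
  have hx : φ x = ∑ b ∈ s, a b • φ b := by
    rw [ha, map_sum]
    exact Finset.sum_congr rfl fun b _ ↦ hφ (a b) b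
  rw [hx]
  exact Submodule.sum_smul_mem _ a fun b hb ↦ Submodule.subset_span ⟨b, hb, rfl⟩

theorem exists_smul_eq_algebraMap {A : Type*} [CommRing A] [Algebra R A] (S : Submonoid R)
    [IsLocalization S A] (hS : S ≤ nonZeroDivisors R) (hR : FFinite R q) {φ : A →+ A}
    (hφ : IsInvPowLinear A q φ) :
    ∃ s ∈ S, ∃ ψ : R →+ R, IsInvPowLinear R q ψ ∧
      ∀ x, algebraMap R A (ψ x) = s • φ (algebraMap R A x) := by
  have hφR := hφ.comp_algebraMap (R := R)
  obtain ⟨P, hPfg, hP⟩ := hφR.exists_fg_forall_mem hR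
  obtain ⟨s, hs, hsP⟩ := FractionalIdeal.isFractional_of_fg (S := S) hPfg
  choose ψ hψ using fun x ↦ hsP _ (hP x)
  have hinj := IsLocalization.injective A hS
  refine ⟨s, hs, AddMonoidHom.mk' ψ fun x y ↦ hinj ?_, fun r x ↦ hinj ?_, hψ⟩
  · simp only [map_add, hψ, smul_add]
  · calc algebraMap R A (ψ (r ^ q • x))
        = r • algebraMap R A (ψ x) := by rw [hψ, hφR, smul_comm, ← hψ]
      _ = algebraMap R A (r • ψ x) := by rw [smul_eq_mul, map_mul, Algebra.smul_def]

theorem frobSplitsWith_of_apply {p e f : ℕ} {ψ : R →+ R} (hψ : IsInvPowLinear R (p ^ f) ψ) {d : R}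
    (hd : FrobSplitsWith p (ψ d) e) : FrobSplitsWith p d (e + f) := by
  obtain ⟨θ, hθ, hθd⟩ := hd
  refine ⟨θ.comp ψ, ?_, hθd⟩
  rw [pow_add]
  exact IsInvPowLinear.comp (R := R) hθ hψ

end IsInvPowLinear

theorem ringHom_finite_iff_exists_finset {R B : Type*} [CommRing R] [CommRing B] {f : R →+* B} :
    f.Finite ↔ ∃ s : Finset B, ∀ x, ∃ a : B → R, x = ∑ b ∈ s, f (a b) * b := by
  algebraize_only [f]
  rw [RingHom.Finite, Module.finite_def, Submodule.FG]
  refine exists_congr fun s ↦ Submodule.eq_top_iff'.trans <| forall_congr' fun x ↦ ⟨fun hx ↦ ?_, ?_⟩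
  · obtain ⟨a, -, ha⟩ := Submodule.mem_span_finset.1 hx
    exact ⟨a, ha.symm⟩
  · rintro ⟨a, rfl⟩
    exact Submodule.sum_smul_mem _ a fun b hb ↦ Submodule.subset_span hb

theorem fFinite_iff_ringHom_finite {R : Type*} [CommRing R] {q : ℕ} {f : R →+* R}
    (hf : ∀ r, f r = r ^ q) : FFinite R q ↔ f.Finite := by
  simp only [ringHom_finite_iff_exists_finset, FFinite, hf]

theorem FFinite.pow {R : Type*} [CommRing R] {p : ℕ} [ExpChar R p] (hR : FFinite R p) (e : ℕ) :
    FFinite R (p ^ e) := by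
  rw [fFinite_iff_ringHom_finite (iterateFrobenius_def p e)]
  induction e with
  | zero => exact iterateFrobenius_zero R p ▸ RingHom.Finite.id R
  | succ e ih =>
    rw [iterateFrobenius_add, iterateFrobenius_one]
    exact ih.comp ((fFinite_iff_ringHom_finite fun _ ↦ rfl).1 hR)

namespace FrobSplitsWith

variable {R : Type*} [CommRing R] {p e f : ℕ} {a b c : R}

theorem of_dvd (hb : FrobSplitsWith p b e) (hab : a ∣ b) : FrobSplitsWith p a e := by
  obtain ⟨d, rfl⟩ := hab
  obtain ⟨φ, hφ, hφa⟩ := hb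
  refine ⟨φ.comp (AddMonoidHom.mulRight d), fun r x ↦ ?_, hφa⟩
  simp only [AddMonoidHom.comp_apply, AddMonoidHom.mulRight_apply, mul_assoc, hφ]

theorem mul (hp : p ≠ 0) (ha : FrobSplitsWith p a e) (hb : FrobSplitsWith p b f) :
    FrobSplitsWith p (a * b) (e + f) := by
  obtain ⟨φ, hφ, hφb⟩ := hb
  have hφa : φ (a ^ p ^ f * b) = a := by rw [hφ, hφb, mul_one]
  have hab : FrobSplitsWith p (a ^ p ^ f * b) (e + f) :=
    IsInvPowLinear.frobSplitsWith_of_apply (R := R) hφ (hφa.symm ▸ ha)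
  exact hab.of_dvd (mul_dvd_mul_right (dvd_pow_self a (pow_ne_zero f hp)) b)

theorem pow (hp : p ≠ 0) (hc : FrobSplitsWith p c e) (n : ℕ) :
    FrobSplitsWith p (c ^ n) (n * e) := by
  induction n with
  | zero => exact ⟨AddMonoidHom.id R, by simp, by simp⟩
  | succ n ih => simpa only [pow_succ, Nat.succ_mul] using ih.mul hp hc

theorem mem_nonZeroDivisors (hp : p ≠ 0) (hc : FrobSplitsWith p c e) :
    c ∈ nonZeroDivisors R := by
  obtain ⟨φ, hφ, hφc⟩ := hc
  refine mem_nonZeroDivisors_iff_right.2 fun x hx ↦ ?_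
  have hxc : x ^ p ^ e * c = 0 :=
    zero_dvd_iff.1 (hx ▸ mul_dvd_mul_right (dvd_pow_self x (pow_ne_zero e hp)) c)
  calc x = φ (x ^ p ^ e * c) := by rw [hφ, hφc, mul_one]
    _ = 0 := by rw [hxc, map_zero]

end FrobSplitsWith

theorem algebraMap_mem_ringCirc {R A : Type*} [CommRing R] [CommRing A] [Algebra R A]
    (S : Submonoid R) [IsLocalization S A] {d : R} (hd : d ∈ ringCirc R) :
    algebraMap R A d ∈ ringCirc A := by
  have hmap := IsLocalization.minimalPrimes_map S A (⊥ : Ideal R)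
  rw [Ideal.map_bot] at hmap
  exact fun P hP ↦ hd (P.under R) (hmap.subset hP)

theorem strongly_F_regular_of_split_general {R A : Type*} [CommRing R] [CommRing A]
    [Algebra R A] (S : Submonoid R) [IsLocalization S A] {p : ℕ} [ExpChar R p]
    (hFF : FFinite R p) (hA : StronglyFRegular A p)
    (hsplit : ∀ s ∈ S, ∃ e, FrobSplitsWith p s e) : StronglyFRegular R p := by
  obtain ⟨-, hred, hA⟩ := hA
  have hS : S ≤ nonZeroDivisors R := fun s hs ↦
    (hsplit s hs).elim fun _ h ↦ h.mem_nonZeroDivisors (expChar_ne_zero R p)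
  have hinj := IsLocalization.injective A hS
  refine ⟨hFF, isReduced_of_injective (algebraMap R A) hinj, fun d hd ↦ ?_⟩
  obtain ⟨e, φ, hφ, hφd⟩ := hA _ (algebraMap_mem_ringCirc S hd)
  obtain ⟨s, hs, ψ, hψ, hψφ⟩ := IsInvPowLinear.exists_smul_eq_algebraMap S hS (hFF.pow e) hφ
  have hψd : ψ d = s := hinj (by rw [hψφ, hφd, Algebra.algebraMap_eq_smul_one])
  obtain ⟨f, hf⟩ := hsplit s hs
  exact ⟨f + e, hψ.frobSplitsWith_of_apply (hψd ▸ hf)⟩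

/-- If `c ∈ R°` is such that the localization `R_c` is strongly F-regular and some
`cF^e : R → F^e_*R` splits, then `R` is strongly F-regular. -/
theorem strongly_F_regular_of_split (R : Type*) [CommRing R]
    [IsNoetherianRing R] [IsReduced R]
    (p : ℕ) [Fact p.Prime] [CharP R p]
    (hFF : FFinite R p)
    (c : R) (hc : c ∈ ringCirc R)
    (hloc : StronglyFRegular (Localization.Away c) p)
    (e : ℕ) (hsplit : FrobSplitsWith p c e) :
    StronglyFRegular R p := by
  refine strongly_F_regular_of_split_general (.powers c) hFF hloc ?_
  rintro _ ⟨n, rfl⟩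
  exact ⟨n * e, hsplit.pow (expChar_ne_zero R p) n⟩
end
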